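/- Every S-squeezed 4-sphere is polytopal; that is, for every shifted order ideal U ⊂ S_[n−6] of monomials of degree at most 2, the S-squeezed 4-sphere S_5(U) is isomorphic to the boundary complex of a simplicial 5-polytope. -/

import Mathlib

/-!
Put `N = n - 2`. The facets of the ball are the sets `{i, i+1, j, j+1, N+1, N+2}` with `i + 2 ≤ j < N`
and `R i j`, where `R i j` means `x_i x_{j-2} ∈ U`, or `j = N - 1`, the value that accounts for the
monomials of degree less than two. Since `U` is shifted, `R` is up-closed (`facetRel_mono`).

An up-closed relation on pairs is a threshold relation: there are real numbers `t₁ < ⋯ < t_N` such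
that `t_i + t_{i+1} + t_j + t_{j+1}` is positive if `R i j` and negative otherwise
(`exists_threshold`, `exists_parameters`). This sum is minus the cubic coefficient of the monic
quartic `q` with roots `t_i, t_{i+1}, t_j, t_{j+1}`, and `q` is nonnegative at all parameters by Gale
evenness. So, looking at the cyclic 4-polytope on the points `t_k` of the moment curve from the
projective point that sends a quartic to minus its cubic coefficient, the facets satisfying `R` are
those on one fixed side. Move this point into the affine chart and suspend it along a fifth axis,
to two vertices `N + 1` and `N + 2` at heights `±1` over it (`placement`). The supporting
hyperplanes of the resulting 5-polytope are then of two kinds: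

* a quartic `q` with `R i j`, tilted so that it vanishes at one of the two new vertices;
* for a triple of parameters bounding the union of these facets, the quartic with zero cubic
  coefficient that vanishes at the triple. Its fourth root is minus the sum of the triple, and the
  signs of the two adjacent quartics put it in the gap where the quartic keeps its sign.

These are exactly the 5-sets in one facet of the ball (`exists_support_boundary`).

It remains to recognise a simplicial polytope from such a list of supporting hyperplanes
(`isPolytopalSphere_of_facets`). Every boundary 5-set has a neighbour across each of its ridges, by a
parity count using that each 5-set lies in at most two facets (`card_pairFacet_supersets_le_two`,
`exists_boundary_exchange`). Let `o` and `z` be the sums of all vertices and of the vertices of a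
proper face `S`. A listed facet `G` minimising the ratio of its form `h_G` at `z` and at `o` contains
`S`: otherwise the neighbour of `G` across a suitable ridge has a smaller ratio
(`face_subset_facet`).
-/

open scoped Classical
noncomputable section
namespace SqueezedSpheres

/-! ### Monomials of `K[x₁,x₂,…]` as finitely supported exponent vectors (index 0 unused). -/

/-- A monomial of the polynomial ring `S_[∞] = K[x₁,x₂,…]`, recorded by its exponent vector. -/
abbrev Mon : Type := ℕ →₀ ℕ

/-- The total degree of a monomial. -/
def degMon (u : Mon) : ℕ := u.sum fun _ e => e

/-- `m(u) = max{i : xᵢ divides u}` (with value `0` for `u = 1`). -/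
def mVar (u : Mon) : ℕ := u.support.sup id

/-- The weakly increasing list `i₁ ≤ i₂ ≤ ⋯ ≤ i_d` of indices with `u = x_{i₁}⋯x_{i_d}`. -/
def sortedIdx (u : Mon) : List ℕ := (Finsupp.toMultiset u).sort (· ≤ ·)

/-- `u ≼ v`: both have the same degree and, writing `u = x_{i₁}⋯x_{i_d}`,
`v = x_{j₁}⋯x_{j_d}` with weakly increasing indices, `i_k ≤ j_k` for all `k`. -/
def prec (u v : Mon) : Prop := List.Forall₂ (· ≤ ·) (sortedIdx u) (sortedIdx v)

/-- The squarefree monomial `x_S = ∏_{i ∈ S} x_i`. -/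
def sqf (S : Finset ℕ) : Mon := Multiset.toFinsupp (S.val)

/-- `u` is a squarefree monomial. -/
def sqfreeMon (u : Mon) : Prop := ∀ j, u j ≤ 1

/-- The lexicographic order: `u <_lex v` iff the leftmost index where the exponent
vectors differ has a larger exponent in `v`. -/
def lexLT (u v : Mon) : Prop := ∃ r, u r < v r ∧ ∀ t, t < r → u t = v t

/-- The degree reverse lexicographic order induced by `x₁ > x₂ > ⋯`:
`u <_drl v` iff `deg u < deg v`, or the degrees agree and at the largest index
where the exponent vectors differ `u` has the larger exponent. -/
def degrevlexLT (u v : Mon) : Prop :=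
  degMon u < degMon v ∨ (degMon u = degMon v ∧ ∃ r, v r < u r ∧ ∀ t, r < t → u t = v t)

/-- The map `α^a` for a sequence `a : ℕ → ℕ` (with `a 0 = 0` in applications):
`α^a(x_{i₁}x_{i₂}⋯x_{i_k}) = x_{i₁} x_{i₂+a₁} x_{i₃+a₂} ⋯ x_{i_k+a_{k-1}}`
for `i₁ ≤ i₂ ≤ ⋯ ≤ i_k`. -/
def alphaMap (a : ℕ → ℕ) (u : Mon) : Mon :=
  Multiset.toFinsupp (↑((sortedIdx u).mapIdx fun j i => i + a j))

variable (K : Type) [Field K]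

/-! ### Monomial ideals of `S_[∞]`. -/

/-- The monomial `x^u` as a polynomial. -/
def mono (u : Mon) : MvPolynomial ℕ K := MvPolynomial.monomial u 1

/-- The monomial `x^u` belongs to the ideal `I`. -/
def memMon (I : Ideal (MvPolynomial ℕ K)) (u : Mon) : Prop := mono K u ∈ I

/-- The (finitely generated) monomial ideal generated by a finite set of monomials. -/
def monSpan (G : Finset Mon) : Ideal (MvPolynomial ℕ K) :=
  Ideal.span ((fun u => mono K u) '' (↑G : Set Mon))

/-- `G(I)`: the minimal monomial generators of a monomial ideal `I`. -/
def GSet (I : Ideal (MvPolynomial ℕ K)) : Set Mon :=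
  {u | memMon K I u ∧ ∀ i ∈ u.support, ¬ memMon K I (u - Finsupp.single i 1)}

/-- `max(I) = max{m(u) : u ∈ G(I)}`. -/
def maxIdx (I : Ideal (MvPolynomial ℕ K)) : ℕ := sSup (mVar '' GSet K I)

/-- For `σ : M_[∞] → M_[∞]`, the ideal `σ(I)` generated by `{σ(u) : u ∈ G(I)}`. -/
def sigmaIdeal (σ : Mon → Mon) (I : Ideal (MvPolynomial ℕ K)) : Ideal (MvPolynomial ℕ K) :=
  Ideal.span ((fun u => mono K (σ u)) '' GSet K I)

/-- `I` is a finitely generated strongly stable (monomial) ideal of `S_[∞]`: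
it is generated by finitely many monomials and is closed under the moves
`v ∈ I`, `u ≼ v` ⟹ `u ∈ I`. -/
def IsFGStronglyStable (I : Ideal (MvPolynomial ℕ K)) : Prop :=
  (∃ G : Finset Mon, I = monSpan K G) ∧
    ∀ u v : Mon, memMon K I v → prec u v → memMon K I u

/-- `I` is a finitely generated squarefree strongly stable ideal of `S_[∞]`. -/
def IsFGSqfStronglyStable (I : Ideal (MvPolynomial ℕ K)) : Prop :=
  (∃ G : Finset Mon, (∀ u ∈ G, sqfreeMon u) ∧ I = monSpan K G) ∧
    ∀ u v : Mon, sqfreeMon u → sqfreeMon v → memMon K I v → prec u v → memMon K I u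

/-! ### Simplicial homology over `K` of a finite simplicial complex,
used to define graded Betti numbers of monomial ideals (via upper Koszul
simplicial complexes, i.e. Hochster-type formulas) and the Cohen-Macaulay and
Gorenstein* properties (via Reisner-type criteria). -/

/-- Boundary map coefficient: the coefficient of the face `T` in `∂S`. -/
def bCoeff (S T : Finset ℕ) : K :=
  if T ⊆ S ∧ S.card = T.card + 1 then
    (-1 : K) ^ (S.filter fun y => y < (S \ T).sum id).card
  else 0

/-- The simplicial boundary map from `i+1`-element faces to `i`-element faces. -/
def bdry (Δ : Finset (Finset ℕ)) (i : ℕ) :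
    ((↥(Δ.filter fun S => S.card = i + 1) → K)) →ₗ[K]
      (↥(Δ.filter fun S => S.card = i) → K) :=
  Matrix.mulVecLin
    (Matrix.of fun (T : ↥(Δ.filter fun S => S.card = i))
        (S : ↥(Δ.filter fun S => S.card = i + 1)) =>
      bCoeff K (↑S : Finset ℕ) (↑T : Finset ℕ))

/-- `redH K Δ i` is the dimension over `K` of the reduced simplicial homology
`H̃_{i-1}(Δ; K)`, computed at chain position `i` (faces of cardinality `i`);
in particular `redH K Δ 0 = dim H̃_{-1}`. -/
def redH (Δ : Finset (Finset ℕ)) : ℕ → ℕ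
  | 0 => Module.finrank K (↥(Δ.filter fun S => S.card = 0) → K) -
      Module.finrank K ↥(LinearMap.range (bdry K Δ 0))
  | (i + 1) => Module.finrank K ↥(LinearMap.ker (bdry K Δ i)) -
      Module.finrank K ↥(LinearMap.range (bdry K Δ (i + 1)))

/-- Membership of `x^b` in the monomial ideal generated by `G`. -/
def memGen (G : Finset Mon) (b : Mon) : Prop := ∃ g ∈ G, g ≤ b

/-- The upper Koszul simplicial complex `K^a(I)` of the monomial ideal generated
by `G` in multidegree `a`. -/
def koszulCx (G : Finset Mon) (a : Mon) : Finset (Finset ℕ) :=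
  a.support.powerset.filter fun S => memGen G (a - sqf S)

/-- The graded Betti number `β_{i,j}` of the monomial ideal generated by `G`,
via Hochster's formula `β_{i,a}(I) = dim_K H̃_{i-1}(K^a(I); K)` summed over all
multidegrees `a` of total degree `j`. -/
def bettiGens (G : Finset Mon) (i j : ℕ) : ℕ :=
  ∑ a ∈ (Finset.Iic (G.sum id)).filter fun a => degMon a = j,
    redH K (koszulCx G a) i

/-- The graded Betti numbers `β_{ij}(I) = dim_K Tor_i(I, K)_j` of a finitely
generated monomial ideal `I` (of value `0` on ideals that are not finitely
generated monomial ideals). -/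
def betti (I : Ideal (MvPolynomial ℕ K)) (i j : ℕ) : ℕ :=
  if h : ∃ G : Finset Mon, I = monSpan K G then bettiGens K h.choose i j else 0

/-- The graded Betti numbers `β_{ij}(R/I)` of the quotient by a finitely
generated monomial ideal. -/
def bettiQ (I : Ideal (MvPolynomial ℕ K)) (i j : ℕ) : ℕ :=
  if i = 0 then (if j = 0 then 1 else 0) else betti K I (i - 1) j

/-- `β_{ij}(R/I)` allowing integer indices (`0` for negative indices). -/
def bettiQZ (I : Ideal (MvPolynomial ℕ K)) (i j : ℤ) : ℕ :=
  if 0 ≤ i ∧ 0 ≤ j then bettiQ K I i.toNat j.toNat else 0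

/-! ### Stable operators. -/

/-- A map `σ : M_[∞] → M_[∞]` is a stable operator if (i) it preserves all graded
Betti numbers of finitely generated strongly stable ideals and (ii) it preserves
inclusions of finitely generated strongly stable ideals. -/
structure IsStableOperator (σ : Mon → Mon) : Prop where
  betti_eq : ∀ I : Ideal (MvPolynomial ℕ K), IsFGStronglyStable K I →
    ∀ i j, betti K I i j = betti K (sigmaIdeal K σ I) i j
  incl : ∀ J I : Ideal (MvPolynomial ℕ K), IsFGStronglyStable K J →
    IsFGStronglyStable K I → J ≤ I → sigmaIdeal K σ J ≤ sigmaIdeal K σ I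

/-- A map `σ : M_[∞] → M_[∞]` is a squarefree stable operator if (i) it sends
finitely generated squarefree strongly stable ideals to squarefree monomial
ideals with the same graded Betti numbers and (ii) it preserves inclusions of
finitely generated squarefree strongly stable ideals. -/
structure IsSqfStableOperator (σ : Mon → Mon) : Prop where
  sqfree : ∀ I : Ideal (MvPolynomial ℕ K), IsFGSqfStronglyStable K I →
    ∀ u ∈ GSet K I, sqfreeMon (σ u)
  betti_eq : ∀ I : Ideal (MvPolynomial ℕ K), IsFGSqfStronglyStable K I →
    ∀ i j, betti K I i j = betti K (sigmaIdeal K σ I) i j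
  incl : ∀ J I : Ideal (MvPolynomial ℕ K), IsFGSqfStronglyStable K J →
    IsFGSqfStronglyStable K I → J ≤ I → sigmaIdeal K σ J ≤ sigmaIdeal K σ I

/-! ### Generic initial ideals with respect to the degree reverse
lexicographic order. -/

/-- `u` is the initial (leading) monomial of the polynomial `f` w.r.t. degrevlex. -/
def IsLeadMon (f : MvPolynomial ℕ K) (u : Mon) : Prop :=
  u ∈ f.support ∧ ∀ v ∈ f.support, v ≠ u → degrevlexLT v u

/-- The initial ideal of `I` w.r.t. the degree reverse lexicographic order. -/
def inIdeal (I : Ideal (MvPolynomial ℕ K)) : Ideal (MvPolynomial ℕ K) :=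
  Ideal.span {p | ∃ f ∈ I, ∃ u, IsLeadMon K f u ∧ p = mono K u}

/-- The action of a matrix `φ ∈ GL_n(K)` on polynomials,
`x_j ↦ ∑_i φ_{ij} x_i` for `1 ≤ j ≤ n`. -/
def gAct (n : ℕ) (φ : Matrix (Fin n) (Fin n) K) :
    MvPolynomial ℕ K →ₐ[K] MvPolynomial ℕ K :=
  MvPolynomial.aeval fun j =>
    if h : 1 ≤ j ∧ j ≤ n then
      ∑ i : Fin n, MvPolynomial.C (φ i ⟨j - 1, by omega⟩) * MvPolynomial.X ((i : ℕ) + 1)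
    else MvPolynomial.X j

/-- Evaluation of a polynomial in the `n × n` matrix entries at a matrix. -/
def evalMat (n : ℕ) (φ : Matrix (Fin n) (Fin n) K)
    (P : MvPolynomial (Fin n × Fin n) K) : K :=
  MvPolynomial.eval (fun p => φ p.1 p.2) P

/-- `J` is the generic initial ideal of `I` (w.r.t. degrevlex and the action of
`GL_n(K)` on `x₁,…,x_n`): there is a nonempty Zariski open subset of `GL_n(K)`
on which `in(φ(I))` is constantly equal to `J`. -/
def GinSpec (n : ℕ) (I J : Ideal (MvPolynomial ℕ K)) : Prop :=
  ∃ P : MvPolynomial (Fin n × Fin n) K, P ≠ 0 ∧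
    (∃ φ : Matrix (Fin n) (Fin n) K, IsUnit φ.det ∧ evalMat K n φ P ≠ 0) ∧
    ∀ φ : Matrix (Fin n) (Fin n) K, IsUnit φ.det → evalMat K n φ P ≠ 0 →
      inIdeal K (Ideal.map (gAct K n φ) I) = J

/-- The generic initial ideal `gin(I)` w.r.t. the degree reverse lexicographic
order (and coordinate changes of `x₁,…,x_n`). -/
def gin (n : ℕ) (I : Ideal (MvPolynomial ℕ K)) : Ideal (MvPolynomial ℕ K) :=
  if h : ∃ J, GinSpec K n I J then h.choose else ⊥

/-- `gin(I)` for a finitely generated ideal of `S_[∞]`, computed in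
`S_[max(I)]` as in the convention `gin(I) = gin(I ∩ S_[max(I)]) S_[∞]`. -/
def ginInf (I : Ideal (MvPolynomial ℕ K)) : Ideal (MvPolynomial ℕ K) :=
  gin K (maxIdx K I) I

/-! ### Simplicial complexes on `[n]`, Stanley-Reisner ideals, `f`-, `h`- and
`g`-vectors, Cohen-Macaulay and Gorenstein* complexes. -/

/-- `Γ` is a simplicial complex on the vertex set `[n] = {1,…,n}`. -/
def IsComplexOn (n : ℕ) (Γ : Finset (Finset ℕ)) : Prop :=
  (∀ S ∈ Γ, S ⊆ Finset.Icc 1 n) ∧ (∀ S ∈ Γ, ∀ T ⊆ S, T ∈ Γ) ∧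
    (∀ i ∈ Finset.Icc 1 n, ({i} : Finset ℕ) ∈ Γ)

/-- `Γ` is `(d-1)`-dimensional (all faces have at most `d` vertices, some face
has exactly `d` vertices). -/
def IsDimensional (Γ : Finset (Finset ℕ)) (d : ℕ) : Prop :=
  (∀ S ∈ Γ, S.card ≤ d) ∧ ∃ S ∈ Γ, S.card = d

/-- The Stanley-Reisner ideal `I_Γ ⊂ S_[n]` of a simplicial complex on `[n]`. -/
def SRideal (n : ℕ) (Γ : Finset (Finset ℕ)) : Ideal (MvPolynomial ℕ K) :=
  Ideal.span {p | ∃ S : Finset ℕ, S ⊆ Finset.Icc 1 n ∧ S ∉ Γ ∧ p = mono K (sqf S)}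

/-- `fvec Γ i = f_{i-1}(Γ)`, the number of faces of `Γ` with `i` vertices. -/
def fvec (Γ : Finset (Finset ℕ)) (i : ℕ) : ℕ := (Γ.filter fun S => S.card = i).card

/-- The `h`-vector of a `(d-1)`-dimensional complex:
`h_i = ∑_{j=0}^{i} (-1)^{i-j} C(d-j, d-i) f_{j-1}`. -/
def hvec (Γ : Finset (Finset ℕ)) (d i : ℕ) : ℤ :=
  ∑ j ∈ Finset.range (i + 1),
    (-1 : ℤ) ^ (i - j) * (Nat.choose (d - j) (d - i) : ℤ) * (fvec Γ j : ℤ)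

/-- The `g`-vector: `g₀ = 1` and `g_i = h_i - h_{i-1}`. -/
def gvec (Γ : Finset (Finset ℕ)) (d i : ℕ) : ℤ :=
  if i = 0 then 1 else hvec Γ d i - hvec Γ d (i - 1)

/-- The link of a face `S` in `Γ`. -/
def linkOf (Γ : Finset (Finset ℕ)) (S : Finset ℕ) : Finset (Finset ℕ) :=
  Γ.filter fun T => Disjoint S T ∧ S ∪ T ∈ Γ

/-- `Γ` is Cohen-Macaulay over `K` (Reisner's criterion: for every face `S` and
every `i` below the dimension of the link of `S`, `H̃_{i-1}(link S; K) = 0`). -/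
def IsCM (Γ : Finset (Finset ℕ)) : Prop :=
  ∀ S ∈ Γ, ∀ i < (linkOf Γ S).sup Finset.card, redH K (linkOf Γ S) i = 0

/-- `Γ` is a `(d-1)`-dimensional Gorenstein* complex over `K` (the standard
characterization: every link has the reduced homology of a sphere of the
appropriate dimension). -/
def IsGorensteinStar (d : ℕ) (Γ : Finset (Finset ℕ)) : Prop :=
  IsDimensional Γ d ∧
    ∀ S ∈ Γ, ∀ i, redH K (linkOf Γ S) i = if i = d - S.card then 1 else 0

/-! ### The monomial sets `L(Γ)` and `U(Γ)`. -/

/-- `L_i(Γ)`: degree-`i` monomials of `S_[n-d]` not belonging to `gin(I_Γ)`. -/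
def Lset (n d : ℕ) (Γ : Finset (Finset ℕ)) (i : ℕ) : Set Mon :=
  {u | (∀ j ∈ u.support, 1 ≤ j ∧ j ≤ n - d) ∧ degMon u = i ∧
    ¬ memMon K (gin K n (SRideal K n Γ)) u}

/-- `L(Γ)`: monomials of `S_[n-d]` not belonging to `gin(I_Γ)`. -/
def LsetAll (n d : ℕ) (Γ : Finset (Finset ℕ)) : Set Mon :=
  {u | (∀ j ∈ u.support, 1 ≤ j ∧ j ≤ n - d) ∧ ¬ memMon K (gin K n (SRideal K n Γ)) u}

/-- `U(Γ)`: monomials of `S_[n-d-1]` not belonging to `gin(I_Γ)`. -/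
def Uset (n d : ℕ) (Γ : Finset (Finset ℕ)) : Set Mon :=
  {u | (∀ j ∈ u.support, 1 ≤ j ∧ j ≤ n - d - 1) ∧
    ¬ memMon K (gin K n (SRideal K n Γ)) u}

/-- `U_i(Γ)`: degree-`i` monomials of `S_[n-d-1]` not belonging to `gin(I_Γ)`. -/
def UsetDeg (n d : ℕ) (Γ : Finset (Finset ℕ)) (i : ℕ) : Set Mon :=
  {u ∈ Uset K n d Γ | degMon u = i}

/-! ### Lefschetz properties. -/

/-- The ideal generated by the variables outside `{x₁,…,x_n}`. -/
def outsideIdeal (n : ℕ) : Ideal (MvPolynomial ℕ K) :=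
  Ideal.span {p | ∃ j : ℕ, (j = 0 ∨ n < j) ∧ p = MvPolynomial.X j}

/-- A linear form in the variables `x₁,…,x_n`. -/
def IsLinForm (n : ℕ) (f : MvPolynomial ℕ K) : Prop :=
  f ∈ MvPolynomial.homogeneousSubmodule ℕ K 1 ∧ f.vars ⊆ Finset.Icc 1 n

/-- The `i`-th homogeneous component of the quotient by `J`, as a `K`-submodule. -/
def grPiece (J : Ideal (MvPolynomial ℕ K)) (i : ℕ) :
    Submodule K (MvPolynomial ℕ K ⧸ J) :=
  Submodule.map (Ideal.Quotient.mkₐ K J).toLinearMap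
    (MvPolynomial.homogeneousSubmodule ℕ K i)

/-- The ideal `I_Γ + (θ₁,…,θ_d)` inside `S_[n]`, realized in `S_[∞]` by also
killing the variables outside `{x₁,…,x_n}`. -/
def fullIdeal (n d : ℕ) (Γ : Finset (Finset ℕ)) (θ : Fin d → MvPolynomial ℕ K) :
    Ideal (MvPolynomial ℕ K) :=
  SRideal K n Γ ⊔ Ideal.span (Set.range θ) ⊔ outsideIdeal K n

/-- `θ₁,…,θ_d` is a system of parameters of `S_[n]/I_Γ` consisting of linear
forms (for a `(d-1)`-dimensional complex: the quotient by them is Artinian,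
i.e. a finite dimensional `K`-vector space). -/
def IsLinearSOP (n d : ℕ) (Γ : Finset (Finset ℕ)) (θ : Fin d → MvPolynomial ℕ K) : Prop :=
  (∀ k, IsLinForm K n (θ k)) ∧ Module.Finite K (MvPolynomial ℕ K ⧸ fullIdeal K n d Γ θ)

/-- Multiplication by (the class of) `f` is injective from the `i`-th to the
`i'`-th homogeneous component of the quotient by `J`. -/
def mulInjOn (J : Ideal (MvPolynomial ℕ K)) (f : MvPolynomial ℕ K) (i i' : ℕ) : Prop :=
  ∀ a b : MvPolynomial ℕ K ⧸ J, a ∈ grPiece K J i → b ∈ grPiece K J i →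
    Ideal.Quotient.mk J f * a = Ideal.Quotient.mk J f * b → a = b

/-- Multiplication by (the class of) `f` maps the `i`-th homogeneous component
of the quotient by `J` onto the `i'`-th one. -/
def mulSurjOnto (J : Ideal (MvPolynomial ℕ K)) (f : MvPolynomial ℕ K) (i i' : ℕ) : Prop :=
  ∀ c ∈ grPiece K J i', ∃ a ∈ grPiece K J i, Ideal.Quotient.mk J f * a = c

/-- The weak Lefschetz property of a `(d-1)`-dimensional (Gorenstein*)
complex `Γ` on `[n]`. -/
def HasWLP (n d : ℕ) (Γ : Finset (Finset ℕ)) : Prop :=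
  ∃ (θ : Fin d → MvPolynomial ℕ K) (ω : MvPolynomial ℕ K),
    IsLinearSOP K n d Γ θ ∧ IsLinForm K n ω ∧
    (∀ i, 1 ≤ i → i ≤ d / 2 → mulInjOn K (fullIdeal K n d Γ θ) ω (i - 1) i) ∧
    (∀ i, d / 2 < i → mulSurjOnto K (fullIdeal K n d Γ θ) ω (i - 1) i)

/-- The strong Lefschetz property of a `(d-1)`-dimensional (Gorenstein*)
complex `Γ` on `[n]`. -/
def HasSLP (n d : ℕ) (Γ : Finset (Finset ℕ)) : Prop :=
  ∃ (θ : Fin d → MvPolynomial ℕ K) (ω : MvPolynomial ℕ K),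
    IsLinearSOP K n d Γ θ ∧ IsLinForm K n ω ∧
    ∀ i ≤ d / 2,
      mulInjOn K (fullIdeal K n d Γ θ) (ω ^ (d - 2 * i)) i (d - i) ∧
      mulSurjOnto K (fullIdeal K n d Γ θ) (ω ^ (d - 2 * i)) i (d - i)

/-! ### Shifted order ideals of monomials, squeezed balls and squeezed spheres. -/

/-- `U` is a shifted order ideal of monomials of `S_[m]`:
it contains `1, x₁,…,x_m`, consists of monomials in `x₁,…,x_m`, is closed
under taking divisors, and is closed under `u ∈ U`, `u ≼ v` ⟹ `v ∈ U`. -/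
def IsShiftedOrderIdeal (m : ℕ) (U : Finset Mon) : Prop :=
  ((0 : Mon) ∈ U) ∧ (∀ i, 1 ≤ i → i ≤ m → (Finsupp.single i 1 : Mon) ∈ U) ∧
  (∀ u ∈ U, ∀ j ∈ (u : Mon).support, 1 ≤ j ∧ j ≤ m) ∧
  (∀ u ∈ U, ∀ v : Mon, v ≤ u → v ∈ U) ∧
  (∀ u ∈ U, ∀ v : Mon, prec u v → (∀ j ∈ v.support, 1 ≤ j ∧ j ≤ m) → v ∈ U)

/-- `I(U) ⊂ S_[∞]`: the ideal generated by all monomials of `S_[m]` not in `U`. -/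
def IU (m : ℕ) (U : Finset Mon) : Ideal (MvPolynomial ℕ K) :=
  Ideal.span {p | ∃ u : Mon, (∀ j ∈ u.support, 1 ≤ j ∧ j ≤ m) ∧ u ∉ U ∧ p = mono K u}

/-- The facet `F_d(u) ⊂ [n]` associated with a monomial `u = x_{i₁}⋯x_{i_k}`,
`i₁ ≤ ⋯ ≤ i_k`:
`F_d(u) = {i₁, i₁+1} ∪ {i₂+2, i₂+3} ∪ ⋯ ∪ {i_k+2(k-1), i_k+2k-1} ∪ {n+2k-d,…,n}`. -/
def Fface (n d : ℕ) (u : Mon) : Finset ℕ :=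
  ((Finset.range (degMon u)).biUnion fun j =>
      {(sortedIdx u).getD j 0 + 2 * j, (sortedIdx u).getD j 0 + 2 * j + 1}) ∪
    Finset.Icc (n + 2 * degMon u - d) n

/-- The squeezed `d`-ball `B_d(U)`: the simplicial complex on `[n]` generated by
`{F_d(u) : u ∈ U}`. -/
def squeezedBall (n d : ℕ) (U : Finset Mon) : Finset (Finset ℕ) :=
  U.biUnion fun u => (Fface n d u).powerset

/-- The squeezed `(d-1)`-sphere `S_d(U) = ∂B_d(U)`: the subcomplex of `B_d(U)`
generated by the `d`-element faces lying in exactly one facet. -/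
def squeezedSphere (n d : ℕ) (U : Finset Mon) : Finset (Finset ℕ) :=
  ((squeezedBall n d U).filter fun G => G.card = d ∧
      ((U.image fun u => Fface n d u).filter fun F => G ⊆ F).card = 1).biUnion
    Finset.powerset

end SqueezedSpheres

/-! ### Linear quotients auxiliary data. -/

namespace SqueezedSpheres
open scoped Classical
noncomputable section

/-- For `u = x_{i₁}⋯x_{i_d}` with `i₁ ≤ ⋯ ≤ i_d`: `iIdx u l = i_l`, with the
convention `i₀ = 1`. -/
def iIdx (u : Mon) (l : ℕ) : ℕ := if l = 0 then 1 else (sortedIdx u).getD (l - 1) 0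

/-- The set `⋃_{l=0}^{d-1} {k : i_l + a_l ≤ k < i_{l+1} + a_l}` (where `i₀ = 1`
and `a₀ = 0`). -/
def ASet (a : ℕ → ℕ) (u : Mon) : Set ℕ :=
  {k | ∃ l < degMon u, iIdx u l + a l ≤ k ∧ k < iIdx u (l + 1) + a l}

/-! ### Polytopal spheres. -/

/-- `S` is the vertex set of a proper (exposed) face of the polytope with
vertices `v i`, `i ∈ [n]`. -/
def IsProperFaceSet (n d : ℕ) (v : ℕ → (Fin d → ℝ)) (S : Finset ℕ) : Prop :=
  ∃ (ℓ : (Fin d → ℝ) →ₗ[ℝ] ℝ) (c : ℝ),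
    (∀ i ∈ Finset.Icc 1 n, ℓ (v i) ≤ c) ∧
    (∀ i ∈ Finset.Icc 1 n, (ℓ (v i) = c ↔ i ∈ S)) ∧
    (∃ i ∈ Finset.Icc 1 n, ℓ (v i) < c)

/-- `Γ` is (isomorphic to) the boundary complex of a simplicial `d`-polytope
with `n` vertices: there is an injective placement `v` of the vertices `[n]` in
`ℝ^d` spanning affinely, each `v i` a vertex (extreme point) of the convex hull,
every proper face a simplex, such that the nonempty faces of `Γ` are exactly
the vertex sets of proper faces of the polytope. -/
def IsPolytopalSphere (n d : ℕ) (Γ : Finset (Finset ℕ)) : Prop :=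
  ∃ v : ℕ → (Fin d → ℝ),
    Set.InjOn v ↑(Finset.Icc 1 n) ∧
    affineSpan ℝ (v '' ↑(Finset.Icc 1 n)) = ⊤ ∧
    (∀ i ∈ Finset.Icc 1 n, v i ∉ convexHull ℝ (v '' ↑((Finset.Icc 1 n).erase i))) ∧
    (∀ S : Finset ℕ, S ⊆ Finset.Icc 1 n → IsProperFaceSet n d v S →
      AffineIndependent ℝ fun i : ↥S => v ↑i) ∧
    (∀ S : Finset ℕ, S.Nonempty →
      (S ∈ Γ ↔ S ⊆ Finset.Icc 1 n ∧ IsProperFaceSet n d v S)) ∧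
    (∅ : Finset ℕ) ∈ Γ

/-! ### Exterior algebraic shifting.

For a generic matrix `g ∈ GL_n(K)` the image of the exterior monomial `e_S` in
the exterior face ring `E/J_Γ` has, in the basis `{e_T : T ∈ Γ}`, coordinates
`± det g[T,S]`; `S` is a face of the exterior algebraic shifted complex
`Δ^e(Γ)` (defined by `J_{Δ^e(Γ)} = Gin(J_Γ)` w.r.t. degrevlex) if and only if
this image does not lie in the span of the images of the `e_T` with
`T <_drl S`. -/

variable (K : Type) [Field K]

/-- Matrix entry `g_{st}` for `1`-based indices `s, t ∈ [n]`. -/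
def gEnt (n : ℕ) (g : Matrix (Fin n) (Fin n) K) (s t : ℕ) : K :=
  if hs : s - 1 < n then if ht : t - 1 < n then g ⟨s - 1, hs⟩ ⟨t - 1, ht⟩ else 0 else 0

/-- The minor `det g[T, S]` of rows `T` and columns `S` (two subsets of `[n]` of
equal cardinality, taken in increasing order). -/
def subDet (n : ℕ) (g : Matrix (Fin n) (Fin n) K) (T S : Finset ℕ) : K :=
  if h : T.card = S.card then
    Matrix.det (Matrix.of fun a b : Fin S.card =>
      gEnt K n g (T.orderEmbOfFin h a) (S.orderEmbOfFin rfl b))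
  else 0

/-- The coordinate vector (in the basis of faces of `Γ`) of the image of the
generic exterior monomial `e_S` in the exterior face ring of `Γ`. -/
def lamVec (n : ℕ) (Γ : Finset (Finset ℕ)) (g : Matrix (Fin n) (Fin n) K)
    (S : Finset ℕ) : Finset ℕ → K :=
  fun T => if T ∈ Γ ∧ T.card = S.card then subDet K n g T S else 0

/-- Degrevlex on squarefree monomials: `S <_drl T` (for `|S| = |T|`) iff the
largest element of the symmetric difference belongs to `S`. -/
def drlSetLT (S T : Finset ℕ) : Prop :=
  ∃ r ∈ S, r ∉ T ∧ ∀ t, r < t → (t ∈ S ↔ t ∈ T)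

/-- `Δ` is the exterior algebraic shifted complex `Δ^e(Γ)` (i.e.
`J_Δ = Gin(J_Γ)`, the generic initial ideal of the exterior face ideal of `Γ`
w.r.t. degrevlex): for every matrix `g` in a nonempty Zariski open subset of
`GL_n(K)`, a subset `S ⊆ [n]` is a face of `Δ` iff the image of the generic
exterior monomial `e_S` in the exterior face ring of `Γ` does not lie in the
span of the images of the `e_T` with `T <_drl S`. -/
def DeltaESpec (n : ℕ) (Γ Δ : Finset (Finset ℕ)) : Prop :=
  ∃ P : MvPolynomial (Fin n × Fin n) K, P ≠ 0 ∧
    (∃ g : Matrix (Fin n) (Fin n) K, IsUnit g.det ∧ evalMat K n g P ≠ 0) ∧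
    ∀ g : Matrix (Fin n) (Fin n) K, IsUnit g.det → evalMat K n g P ≠ 0 →
      ∀ S : Finset ℕ, S ∈ Δ ↔ S ⊆ Finset.Icc 1 n ∧
        lamVec K n Γ g S ∉ Submodule.span K
          {w | ∃ T : Finset ℕ, T ⊆ Finset.Icc 1 n ∧ T.card = S.card ∧
            drlSetLT T S ∧ w = lamVec K n Γ g T}

/-- The exterior algebraic shifted complex `Δ^e(Γ)` of a complex on `[n]`. -/
def deltaE (n : ℕ) (Γ : Finset (Finset ℕ)) : Finset (Finset ℕ) :=
  if h : ∃ Δ, DeltaESpec K n Γ Δ then h.choose else ∅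

/-- The complex `σ(Γ)` on `[n]` defined by `I_{σ(Γ)} = σ(I_Γ S_[∞]) ∩ S_[n]`. -/
def sigmaCplx (n : ℕ) (σ : Mon → Mon) (Γ : Finset (Finset ℕ)) : Finset (Finset ℕ) :=
  (Finset.Icc 1 n).powerset.filter fun S =>
    ¬ memMon K (sigmaIdeal K σ (SRideal K n Γ)) (sqf S)

/-! ### Squeezing. -/

/-- `U(Γ)` as a finite set of monomials. -/
def UFin (n d : ℕ) (Γ : Finset (Finset ℕ)) : Finset Mon :=
  if h : (Uset K n d Γ).Finite then h.toFinset else ∅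

/-- The squeezing operation `Sq(Γ) = S_d(U(Γ))`. -/
def SqCplx (n d : ℕ) (Γ : Finset (Finset ℕ)) : Finset (Finset ℕ) :=
  squeezedSphere n d (UFin K n d Γ)

/-- The face `{i₁, i₂+1, …, i_k+k-1} ∪ {n-k+1,…,n}` associated with a monomial
`u = x_{i₁}⋯x_{i_k}`, `i₁ ≤ ⋯ ≤ i_k`. -/
def Lface (n : ℕ) (u : Mon) : Finset ℕ :=
  ((Finset.range (degMon u)).image fun j => (sortedIdx u).getD j 0 + j) ∪
    Finset.Icc (n - degMon u + 1) n

end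
end SqueezedSpheres

namespace SqueezedSpheres

/-! ### Recognising a polytope from a family of facets -/

/-- An affine function `c - ℓ` on `ℝ^d`, given as a linear form `φ` on `ℝ^d × ℝ` evaluated at
height one. -/
lemma exists_affine_of_linear {d : ℕ} (φ : (Fin d → ℝ) × ℝ →ₗ[ℝ] ℝ) :
    ∃ (ℓ : (Fin d → ℝ) →ₗ[ℝ] ℝ) (c : ℝ), ∀ v, φ (v, 1) = c - ℓ v := by
  refine ⟨-(φ ∘ₗ LinearMap.inl ℝ _ _), φ (0, 1), fun v => ?_⟩
  have : ((v, 1) : (Fin d → ℝ) × ℝ) = (v, 0) + (0, 1) := by simp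
  rw [this, map_add]
  simp
  ring

lemma exists_linear_of_affine {d : ℕ} (ℓ : (Fin d → ℝ) →ₗ[ℝ] ℝ) (c : ℝ) :
    ∃ φ : (Fin d → ℝ) × ℝ →ₗ[ℝ] ℝ, ∀ v, φ (v, 1) = c - ℓ v := by
  refine ⟨c • LinearMap.snd ℝ _ _ - ℓ ∘ₗ LinearMap.fst ℝ _ _, fun v => ?_⟩
  simp

/-- A dual-simplex argument. Among the given facets `G`, one minimising `h_G(z) / h_G(o)`, where `z`
is the barycentre of the face `S` and `o` that of all points, contains `S`: otherwise `z` has a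
negative coordinate with respect to `G ∪ {o}`, and exchanging the corresponding vertex lowers the
minimum. -/
lemma face_subset_facet {d n : ℕ} (W : ℕ → (Fin d → ℝ) × ℝ) (𝓖 : Finset (Finset ℕ))
    (h𝓖 : 𝓖.Nonempty)
    (hsub : ∀ G ∈ 𝓖, G ⊆ Finset.Icc 1 n)
    (h : Finset ℕ → (Fin d → ℝ) × ℝ →ₗ[ℝ] ℝ)
    (hh : ∀ G ∈ 𝓖, ∀ i ∈ Finset.Icc 1 n, 0 ≤ h G (W i) ∧ (h G (W i) = 0 ↔ i ∈ G))
    (hpos : ∀ G ∈ 𝓖, 0 < h G (∑ i ∈ Finset.Icc 1 n, W i))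
    (hspan : ∀ G ∈ 𝓖, ∀ o, 0 < h G o → ∀ z, ∃ (a : ℝ) (b : ℕ → ℝ),
      z = a • o + ∑ x ∈ G, b x • W x)
    (hnb : ∀ G ∈ 𝓖, ∀ x ∈ G, ∃ G' ∈ 𝓖, x ∉ G' ∧ G.erase x ⊆ G')
    (S : Finset ℕ) (hS : S ⊆ Finset.Icc 1 n) (φ : (Fin d → ℝ) × ℝ →ₗ[ℝ] ℝ)
    (hφ : ∀ i ∈ Finset.Icc 1 n, 0 ≤ φ (W i)) (hφS : ∀ i ∈ S, φ (W i) = 0)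
    (hφpos : ∃ i ∈ Finset.Icc 1 n, 0 < φ (W i)) :
    ∃ G ∈ 𝓖, S ⊆ G := by
  set o := ∑ i ∈ Finset.Icc 1 n, W i with ho
  set z := ∑ i ∈ S, W i with hz
  have hφo : 0 < φ o := by
    rw [ho, map_sum]
    exact Finset.sum_pos' hφ hφpos
  have hφz : φ z = 0 := by
    rw [hz, map_sum]
    exact Finset.sum_eq_zero hφS
  clear_value o z
  obtain ⟨G, hG, hmin⟩ := Finset.exists_min_image 𝓖 (fun G => h G z / h G o) h𝓖
  refine ⟨G, hG, ?_⟩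
  have hznn : 0 ≤ h G z := by
    rw [hz, map_sum]
    exact Finset.sum_nonneg fun i hi => (hh G hG i (hS hi)).1
  by_cases hz0 : h G z = 0
  · intro i hi
    rw [hz, map_sum, Finset.sum_eq_zero_iff_of_nonneg
      (fun i hi => (hh G hG i (hS hi)).1)] at hz0
    exact (hh G hG i (hS hi)).2.1 (hz0 i hi)
  exfalso
  obtain ⟨a, b, hab⟩ := hspan G hG o (hpos G hG) z
  have h1 : h G z = a * h G o := by
    rw [hab, map_add, map_smul, map_sum, Finset.sum_eq_zero, add_zero, smul_eq_mul]
    intro x hx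
    rw [map_smul, (hh G hG x (hsub G hG hx)).2.2 hx, smul_zero]
  have ha : 0 < a := by
    have : 0 < h G z := lt_of_le_of_ne hznn (Ne.symm hz0)
    rw [h1] at this
    exact (pos_iff_pos_of_mul_pos this).2 (hpos G hG)
  have h2 : ∃ x ∈ G, b x < 0 := by
    by_contra! hcon
    have : 0 < φ z := by
      rw [hab, map_add, map_smul, map_sum, smul_eq_mul]
      refine add_pos_of_pos_of_nonneg (mul_pos ha hφo) (Finset.sum_nonneg fun x hx => ?_)
      rw [map_smul, smul_eq_mul]
      exact mul_nonneg (hcon x hx) (hφ x (hsub G hG hx))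
    exact this.ne' hφz
  obtain ⟨x, hx, hbx⟩ := h2
  obtain ⟨G', hG', hxG', hGG'⟩ := hnb G hG x hx
  have h3 : h G' z = a * h G' o + b x * h G' (W x) := by
    rw [hab, map_add, map_smul, map_sum, smul_eq_mul, Finset.sum_eq_single_of_mem x hx,
      map_smul, smul_eq_mul]
    intro y hy hyx
    rw [map_smul, (hh G' hG' y (hsub G hG hy)).2.2 (hGG' (Finset.mem_erase.2 ⟨hyx, hy⟩)),
      smul_zero]
  have h4 : 0 < h G' (W x) := by
    have := hh G' hG' x (hsub G hG hx)
    exact lt_of_le_of_ne this.1 fun h => hxG' (this.2.1 h.symm)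
  have h5 := hmin G' hG'
  have hp := hpos G hG
  have hp' := hpos G' hG'
  rw [h1, mul_div_assoc, div_self hp.ne', mul_one, le_div_iff₀ hp'] at h5
  have := mul_neg_of_neg_of_pos hbx h4
  linarith

/-- A family of `d`-sets, each cut out by a supporting hyperplane and closed under exchanging any
given vertex, is the full set of facets of a simplicial `d`-polytope. -/
theorem isPolytopalSphere_of_facets {d n : ℕ} (V : ℕ → Fin d → ℝ) (𝓖 : Finset (Finset ℕ))
    (hsub : ∀ G ∈ 𝓖, G ⊆ Finset.Icc 1 n) (hcard : ∀ G ∈ 𝓖, G.card = d) (hn : d < n)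
    (hsupp : ∀ G ∈ 𝓖, ∃ (ℓ : (Fin d → ℝ) →ₗ[ℝ] ℝ) (c : ℝ),
      ∀ i ∈ Finset.Icc 1 n, ℓ (V i) ≤ c ∧ (ℓ (V i) = c ↔ i ∈ G))
    (hnb : ∀ G ∈ 𝓖, ∀ x ∈ G, ∃ G' ∈ 𝓖, x ∉ G' ∧ G.erase x ⊆ G')
    (hvert : ∀ i ∈ Finset.Icc 1 n, ∃ G ∈ 𝓖, i ∈ G) :
    IsPolytopalSphere n d (𝓖.biUnion Finset.powerset) := by
  set W : ℕ → (Fin d → ℝ) × ℝ := fun i => (V i, 1) with hW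
  have hex : ∀ G ∈ 𝓖, ∃ φ : (Fin d → ℝ) × ℝ →ₗ[ℝ] ℝ,
      ∀ i ∈ Finset.Icc 1 n, 0 ≤ φ (W i) ∧ (φ (W i) = 0 ↔ i ∈ G) := by
    intro G hG
    obtain ⟨ℓ, c, hl⟩ := hsupp G hG
    obtain ⟨φ, hφ⟩ := exists_linear_of_affine ℓ c
    refine ⟨φ, fun i hi => ?_⟩
    rw [hW, hφ, ← (hl i hi).2, sub_eq_zero, sub_nonneg]
    exact ⟨(hl i hi).1, eq_comm⟩
  choose! h hh using hex
  choose! nb hnb1 hnb2 hnb3 using hnb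
  have hout : ∀ G ∈ 𝓖, ∃ i ∈ Finset.Icc 1 n, i ∉ G := by
    intro G hG
    by_contra! hcon
    have := Finset.card_le_card (show Finset.Icc 1 n ⊆ G from hcon)
    rw [hcard G hG, Nat.card_Icc] at this
    omega
  have hposi : ∀ G ∈ 𝓖, ∀ i ∈ Finset.Icc 1 n, i ∉ G → 0 < h G (W i) := fun G hG i hi hiG =>
    lt_of_le_of_ne (hh G hG i hi).1 fun e => hiG ((hh G hG i hi).2.1 e.symm)
  have hpos : ∀ G ∈ 𝓖, 0 < h G (∑ i ∈ Finset.Icc 1 n, W i) := by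
    intro G hG
    obtain ⟨i, hi, hiG⟩ := hout G hG
    rw [map_sum]
    exact Finset.sum_pos' (fun i hi => (hh G hG i hi).1) ⟨i, hi, hposi G hG i hi hiG⟩
  -- The neighbouring facets provide a dual system for the vertices of `G`.
  have hli : ∀ G ∈ 𝓖, ∀ o, 0 < h G o →
      LinearIndependent ℝ (fun x : Option ↥G => x.elim o fun y => W y) := by
    intro G hG o ho
    rw [Fintype.linearIndependent_iff]
    intro g hg
    rw [Fintype.sum_option] at hg
    simp only [Option.elim] at hg
    have h0 : g none = 0 := by
      have := congrArg (h G) hg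
      rw [map_add, map_smul, map_sum, map_zero, Finset.sum_eq_zero, add_zero, smul_eq_mul] at this
      · exact (mul_eq_zero.1 this).resolve_right ho.ne'
      · intro x _
        rw [map_smul, (hh G hG x (hsub G hG x.2)).2.2 x.2, smul_zero]
    intro x
    cases x with
    | none => exact h0
    | some x =>
      rw [h0, zero_smul, zero_add] at hg
      have := congrArg (h (nb G x)) hg
      rw [map_sum, map_zero, Finset.sum_eq_single x, map_smul, smul_eq_mul] at this
      · exact (mul_eq_zero.1 this).resolve_right
          (hposi _ (hnb1 G hG x x.2) x (hsub G hG x.2) (hnb2 G hG x x.2)).ne'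
      · intro y _ hy
        rw [map_smul, (hh _ (hnb1 G hG x x.2) y (hsub G hG y.2)).2.2, smul_zero]
        exact hnb3 G hG x x.2 (Finset.mem_erase.2 ⟨fun e => hy (Subtype.ext e), y.2⟩)
      · simp
  have hspan : ∀ G ∈ 𝓖, ∀ o, 0 < h G o → ∀ z, ∃ (a : ℝ) (b : ℕ → ℝ),
      z = a • o + ∑ x ∈ G, b x • W x := by
    intro G hG o ho z
    have htop := (hli G hG o ho).span_eq_top_of_card_eq_finrank'
      (by simp [hcard G hG])
    have hz : z ∈ Submodule.span ℝ (Set.range fun x : Option ↥G => x.elim o fun y => W y) := by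
      rw [htop]; trivial
    obtain ⟨c, hc⟩ := (Submodule.mem_span_range_iff_exists_fun ℝ).1 hz
    rw [Fintype.sum_option] at hc
    simp only [Option.elim] at hc
    refine ⟨c none, fun x => if hx : x ∈ G then c (some ⟨x, hx⟩) else 0, ?_⟩
    rw [← hc, ← Finset.sum_coe_sort G]
    simp
  have hai : ∀ (ι : Type) (p : ι → Fin d → ℝ),
      LinearIndependent ℝ (fun i => ((p i, 1) : (Fin d → ℝ) × ℝ)) → AffineIndependent ℝ p := by
    intro ι p hp
    rw [affineIndependent_iff]
    intro s w hw1 hw2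
    refine linearIndependent_iff'.1 hp s w ?_
    ext1
    · simpa [Prod.fst_sum] using hw2
    · simpa [Prod.snd_sum] using hw1
  -- Faces of facets are exposed: add up the supporting functions of the neighbours.
  have hface : ∀ G ∈ 𝓖, ∀ S ⊆ G, IsProperFaceSet n d V S := by
    intro G hG S hS
    obtain ⟨ℓ, c, hl⟩ := exists_affine_of_linear (h G + ∑ x ∈ G \ S, h (nb G x))
    have hl' : ∀ i, c - ℓ (V i) = h G (W i) + ∑ x ∈ G \ S, h (nb G x) (W i) := by
      intro i
      rw [← hl]
      simp [hW, LinearMap.sum_apply]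
    have hs : ∀ i ∈ Finset.Icc 1 n, ∀ x ∈ G \ S, 0 ≤ h (nb G x) (W i) := fun i hi x hx =>
      (hh _ (hnb1 G hG x (Finset.mem_sdiff.1 hx).1) i hi).1
    have hnn : ∀ i ∈ Finset.Icc 1 n, 0 ≤ c - ℓ (V i) := fun i hi => by
      rw [hl']
      exact add_nonneg (hh G hG i hi).1 (Finset.sum_nonneg (hs i hi))
    have hz : ∀ i ∈ Finset.Icc 1 n, (c - ℓ (V i) = 0 ↔ i ∈ S) := fun i hi => by
      rw [hl', add_eq_zero_iff_of_nonneg (hh G hG i hi).1 (Finset.sum_nonneg (hs i hi)),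
        (hh G hG i hi).2, Finset.sum_eq_zero_iff_of_nonneg (hs i hi)]
      constructor
      · rintro ⟨hiG, h0⟩
        by_contra hiS
        have := h0 i (Finset.mem_sdiff.2 ⟨hiG, hiS⟩)
        exact hnb2 G hG i hiG ((hh _ (hnb1 G hG i hiG) i hi).2.1 this)
      · intro hiS
        refine ⟨hS hiS, fun x hx => ?_⟩
        rw [Finset.mem_sdiff] at hx
        rw [(hh _ (hnb1 G hG x hx.1) i hi).2]
        exact hnb3 G hG x hx.1 (Finset.mem_erase.2 ⟨fun e => hx.2 (e ▸ hiS), hS hiS⟩)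
    refine ⟨ℓ, c, fun i hi => sub_nonneg.1 (hnn i hi), fun i hi => ?_, ?_⟩
    · rw [← hz i hi, sub_eq_zero, eq_comm]
    · obtain ⟨i, hi, hiG⟩ := hout G hG
      refine ⟨i, hi, sub_pos.1 (lt_of_le_of_ne (hnn i hi) fun e => hiG (hS ?_))⟩
      exact (hz i hi).1 e.symm
  have hne : 𝓖.Nonempty := by
    obtain ⟨G, hG, -⟩ := hvert 1 (Finset.mem_Icc.2 ⟨le_rfl, by omega⟩)
    exact ⟨G, hG⟩
  have hconv : ∀ S ⊆ Finset.Icc 1 n, IsProperFaceSet n d V S → ∃ G ∈ 𝓖, S ⊆ G := by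
    rintro S hS ⟨ℓ, c, h1, h2, i, hi, h3⟩
    obtain ⟨φ, hφ⟩ := exists_linear_of_affine ℓ c
    refine face_subset_facet W 𝓖 hne hsub h hh hpos hspan
      (fun G hG x hx => ⟨nb G x, hnb1 G hG x hx, hnb2 G hG x hx, hnb3 G hG x hx⟩) S hS φ
      (fun i hi => ?_) (fun i hi => ?_) ⟨i, hi, ?_⟩
    · rw [hW, hφ, sub_nonneg]; exact h1 i hi
    · rw [hW, hφ, sub_eq_zero]; exact ((h2 i (hS hi)).2 hi).symm
    · rw [hW, hφ, sub_pos]; exact h3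
  have hpt : ∀ i ∈ Finset.Icc 1 n, ∃ (ℓ : (Fin d → ℝ) →ₗ[ℝ] ℝ) (c : ℝ), ℓ (V i) = c ∧
      ∀ j ∈ Finset.Icc 1 n, j ≠ i → ℓ (V j) < c := by
    intro i hi
    obtain ⟨G, hG, hiG⟩ := hvert i hi
    obtain ⟨ℓ, c, h1, h2, -⟩ := hface G hG {i} (by simpa using hiG)
    refine ⟨ℓ, c, (h2 i hi).2 (by simp), fun j hj hji => lt_of_le_of_ne (h1 j hj) fun e => hji ?_⟩
    simpa using (h2 j hj).1 e
  refine ⟨V, ?_, ?_, ?_, ?_, ?_, ?_⟩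
  · intro i hi j hj hij
    by_contra hne
    obtain ⟨ℓ, c, h1, h2⟩ := hpt i hi
    have := h2 j hj (Ne.symm hne)
    rw [← hij, h1] at this
    exact lt_irrefl _ this
  · obtain ⟨G, hG⟩ := hne
    obtain ⟨i, hi, hiG⟩ := hout G hG
    have hl := hai _ (fun x : Option ↥G => x.elim (V i) fun y => V y) (by
      convert hli G hG (W i) (hposi G hG i hi hiG) using 2 with x
      cases x <;> rfl)
    have htop := (hl.affineSpan_eq_top_iff_card_eq_finrank_add_one).2 (by simp [hcard G hG])
    refine top_le_iff.1 (htop ▸ affineSpan_mono ℝ ?_)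
    rintro _ ⟨x, rfl⟩
    cases x with
    | none => exact ⟨i, hi, rfl⟩
    | some y => exact ⟨y, hsub G hG y.2, rfl⟩
  · intro i hi hmem
    obtain ⟨ℓ, c, h1, h2⟩ := hpt i hi
    have : convexHull ℝ (V '' ↑((Finset.Icc 1 n).erase i)) ⊆ {x | ℓ x < c} := by
      refine convexHull_min ?_ (convex_halfSpace_lt ℓ.isLinear c)
      rintro _ ⟨j, hj, rfl⟩
      have hj := Finset.mem_erase.1 (Finset.mem_coe.1 hj)
      exact h2 j hj.2 hj.1
    exact (this hmem).ne h1
  · intro S hS hf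
    obtain ⟨G, hG, hSG⟩ := hconv S hS hf
    have hl := (hli G hG _ (hpos G hG)).comp (fun x : ↥S => some ⟨x.1, hSG x.2⟩)
      (fun x y hxy => by
        have hxy' : (some ⟨x.1, hSG x.2⟩ : Option ↥G) = some ⟨y.1, hSG y.2⟩ := hxy
        have hxy'' := Option.some.inj hxy'
        have h3 : x.1 = y.1 := congrArg (fun a : ↥G => a.1) hxy''
        exact Subtype.ext h3)
    exact hai _ _ hl
  · intro S _
    simp only [Finset.mem_biUnion, Finset.mem_powerset]
    constructor
    · rintro ⟨G, hG, hSG⟩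
      exact ⟨hSG.trans (hsub G hG), hface G hG S hSG⟩
    · rintro ⟨hS, hf⟩
      exact hconv S hS hf
  · obtain ⟨G, hG⟩ := hne
    exact Finset.mem_biUnion.2 ⟨G, hG, by simp⟩

/-! ### The boundary of a pseudomanifold is closed -/

/-- If every `m`-set lies in at most two members of a family of `(m+1)`-sets, then the `m`-sets lying
in exactly one member form a family closed under exchanging any given vertex. This is a parity
count: each member containing `E = G \ {x}` accounts for exactly two `m`-sets containing `E`. -/
lemma exists_boundary_exchange (m : ℕ) (𝓕 : Finset (Finset ℕ)) (hF : ∀ F ∈ 𝓕, F.card = m + 1)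
    (h2 : ∀ G : Finset ℕ, G.card = m → (𝓕.filter fun F => G ⊆ F).card ≤ 2)
    (G : Finset ℕ) (hG : G.card = m) (h1 : (𝓕.filter fun F => G ⊆ F).card = 1)
    (x : ℕ) (hx : x ∈ G) :
    ∃ G' : Finset ℕ, G'.card = m ∧ (𝓕.filter fun F => G' ⊆ F).card = 1 ∧ x ∉ G' ∧
      G.erase x ⊆ G' := by
  by_contra! hcon
  set E := G.erase x with hE
  have hEc : E.card + 1 = m := by rw [hE, Finset.card_erase_add_one hx, hG]
  have hins : insert x E = G := Finset.insert_erase hx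
  set V := 𝓕.biUnion id \ E with hV
  have hxV : x ∈ V := by
    obtain ⟨F, hFF⟩ := Finset.card_pos.1 (by rw [h1]; exact one_pos)
    rw [Finset.mem_filter] at hFF
    rw [hV, Finset.mem_sdiff, Finset.mem_biUnion]
    exact ⟨⟨F, hFF.1, hFF.2 hx⟩, by simp [hE]⟩
  have hcount : ∑ y ∈ V, (𝓕.filter fun F => insert y E ⊆ F).card =
      ∑ F ∈ 𝓕, (V.filter fun y => insert y E ⊆ F).card :=
    Finset.sum_card_bipartiteAbove_eq_sum_card_bipartiteBelow fun y F => insert y E ⊆ F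
  have hR : Even (∑ F ∈ 𝓕, (V.filter fun y => insert y E ⊆ F).card) := by
    refine Finset.even_sum _ fun F hFF => ?_
    by_cases hEF : E ⊆ F
    · have : (V.filter fun y => insert y E ⊆ F) = F \ E := by
        ext y
        simp only [hV, Finset.mem_filter, Finset.mem_sdiff, Finset.mem_biUnion, id,
          Finset.insert_subset_iff]
        constructor
        · rintro ⟨⟨_, h⟩, h', _⟩
          exact ⟨h', h⟩
        · rintro ⟨h, h'⟩
          exact ⟨⟨⟨F, hFF, h⟩, h'⟩, h, hEF⟩
      rw [this, Finset.card_sdiff_of_subset hEF, hF F hFF, ← hEc]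
      exact ⟨1, by omega⟩
    · have : (V.filter fun y => insert y E ⊆ F) = ∅ :=
        Finset.filter_eq_empty_iff.2 fun y _ h =>
          hEF (fun z hz => h (Finset.mem_insert_of_mem hz))
      simp [this]
  have hL : Even (∑ y ∈ V.erase x, (𝓕.filter fun F => insert y E ⊆ F).card) := by
    refine Finset.even_sum _ fun y hy => ?_
    rw [Finset.mem_erase, hV, Finset.mem_sdiff] at hy
    have hc : (insert y E).card = m := by rw [Finset.card_insert_of_notMem hy.2.2, hEc]
    have hxy : x ∉ insert y E := by
      rw [Finset.mem_insert, not_or]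
      exact ⟨hy.1.symm, by simp [hE]⟩
    have hne : (𝓕.filter fun F => insert y E ⊆ F).card ≠ 1 := fun h =>
      hcon _ hc h hxy (Finset.subset_insert _ _)
    have := h2 _ hc
    interval_cases (𝓕.filter fun F => insert y E ⊆ F).card
    · exact Even.zero
    · exact absurd rfl hne
    · exact even_two
  rw [← Finset.add_sum_erase V _ hxV, hins, h1] at hcount
  rw [← hcount] at hR
  have := (Nat.even_add.1 hR).2 hL
  exact absurd this (by decide)

/-! ### Choosing the parameters on the moment curve -/

lemma exists_abs_bound (t : ℕ → ℝ) (m : ℕ) : ∃ B : ℝ, 0 ≤ B ∧ ∀ p ≤ m, |t p| ≤ B :=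
  ⟨∑ p ∈ Finset.range (m + 1), |t p|, Finset.sum_nonneg fun _ _ => abs_nonneg _, fun p hp =>
    Finset.single_le_sum (f := fun p => |t p|) (fun _ _ => abs_nonneg _)
      (Finset.mem_range.2 (by omega))⟩

/-- An up-closed relation is a threshold relation: parameters are added one at a time, at the end
of the interval that is forced. If `R a b` holds for the extreme pair, then `R i b` holds for all
`i ≥ a`, and a very large last parameter is right for all these; otherwise `R a j` fails for all
`j ≤ b`, and a very negative first parameter is right. -/
lemma exists_threshold (R : ℕ → ℕ → Prop)
    (hR : ∀ i j i' j', R i j → i ≤ i' → j ≤ j' → i' + 2 ≤ j' → R i' j') (k a : ℕ) :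
    ∃ t : ℕ → ℝ, (∀ p q, a ≤ p → p < q → q ≤ a + k → t p < t q) ∧
      ∀ i j, a ≤ i → i + 2 ≤ j → j + 1 ≤ a + k →
        (R i j → 0 < t i + t (i + 1) + t j + t (j + 1)) ∧
        (¬ R i j → t i + t (i + 1) + t j + t (j + 1) < 0) := by
  induction k generalizing a with
  | zero => exact ⟨fun _ => 0, fun p q _ _ _ => by omega, fun i j _ _ _ => by omega⟩
  | succ k ih =>
    by_cases hk : k < 2
    · exact ⟨fun p => p, fun p q _ h _ => Nat.cast_lt.2 h, fun i j _ _ _ => by omega⟩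
    by_cases hRa : R a (a + k)
    · obtain ⟨t, ht1, ht2⟩ := ih a
      obtain ⟨B, hB0, hB⟩ := exists_abs_bound t (a + k)
      have hlo : ∀ p, p ≤ a + k → -B ≤ t p ∧ t p ≤ B := fun p hp => abs_le.1 (hB p hp)
      refine ⟨Function.update t (a + k + 1) (4 * B + 1), fun p q hp hpq hq => ?_,
        fun i j hi hij hj => ?_⟩
      · rw [Function.update_of_ne (by omega)]
        by_cases hqe : q = a + k + 1
        · subst hqe
          rw [Function.update_self]
          linarith [(hlo p (by omega)).2]
        · rw [Function.update_of_ne hqe]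
          exact ht1 p q hp hpq (by omega)
      · rw [Function.update_of_ne (by omega), Function.update_of_ne (by omega),
          Function.update_of_ne (by omega)]
        by_cases hje : j = a + k
        · subst hje
          rw [Function.update_self]
          refine ⟨fun _ => ?_, fun h => absurd (hR _ _ _ _ hRa hi le_rfl hij) h⟩
          linarith [(hlo i (by omega)).1, (hlo (i + 1) (by omega)).1, (hlo (a + k) le_rfl).1]
        · rw [Function.update_of_ne (by omega)]
          exact ht2 i j hi hij (by omega)
    · obtain ⟨t, ht1, ht2⟩ := ih (a + 1)
      obtain ⟨B, hB0, hB⟩ := exists_abs_bound t (a + k + 1)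
      have hlo : ∀ p, p ≤ a + k + 1 → -B ≤ t p ∧ t p ≤ B := fun p hp => abs_le.1 (hB p hp)
      refine ⟨Function.update t a (-(4 * B + 1)), fun p q hp hpq hq => ?_,
        fun i j hi hij hj => ?_⟩
      · rw [Function.update_of_ne (by omega : q ≠ a)]
        by_cases hpe : p = a
        · subst hpe
          rw [Function.update_self]
          linarith [(hlo q (by omega)).1]
        · rw [Function.update_of_ne hpe]
          exact ht1 p q (by omega) hpq (by omega)
      · rw [Function.update_of_ne (by omega : i + 1 ≠ a), Function.update_of_ne (by omega : j ≠ a),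
          Function.update_of_ne (by omega : j + 1 ≠ a)]
        by_cases hie : i = a
        · subst hie
          rw [Function.update_self]
          refine ⟨fun h => absurd (hR _ _ _ _ h le_rfl (by omega) (by omega)) hRa, fun _ => ?_⟩
          linarith [(hlo (i + 1) (by omega)).2, (hlo j (by omega)).2, (hlo (j + 1) (by omega)).2]
        · rw [Function.update_of_ne hie]
          exact ht2 i j (by omega) hij (by omega)

/-- The parameters used for the polytope: in addition the last one dominates all others. -/
lemma exists_parameters (N : ℕ) (hN : 4 ≤ N) (R : ℕ → ℕ → Prop)
    (hR : ∀ i j i' j', R i j → i ≤ i' → j ≤ j' → i' + 2 ≤ j' → R i' j')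
    (hlast : ∀ i, R i (N - 1)) :
    ∃ t : ℕ → ℝ, (∀ p q, 1 ≤ p → p < q → q ≤ N → t p < t q) ∧
      (∀ p q r, p < N → q < N → r < N → 0 < t p + t q + t r + t N) ∧
      ∀ i j, 1 ≤ i → i + 2 ≤ j → j + 1 ≤ N →
        (R i j → 0 < t i + t (i + 1) + t j + t (j + 1)) ∧
        (¬ R i j → t i + t (i + 1) + t j + t (j + 1) < 0) := by
  obtain ⟨M, rfl⟩ : ∃ M, N = M + 1 := ⟨N - 1, by omega⟩
  obtain ⟨t, ht1, ht2⟩ := exists_threshold R hR (M - 1) 1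
  obtain ⟨B, hB0, hB⟩ := exists_abs_bound t M
  have hlo : ∀ p, p ≤ M → -B ≤ t p ∧ t p ≤ B := fun p hp => abs_le.1 (hB p hp)
  have hbig : ∀ p q r, p < M + 1 → q < M + 1 → r < M + 1 → 0 < t p + t q + t r + (4 * B + 1) :=
    fun p q r hp hq hr => by
      linarith [(hlo p (by omega)).1, (hlo q (by omega)).1, (hlo r (by omega)).1]
  refine ⟨Function.update t (M + 1) (4 * B + 1), fun p q hp hpq hq => ?_, fun p q r hp hq hr => ?_,
    fun i j hi hij hj => ?_⟩
  · rw [Function.update_of_ne (by omega : p ≠ M + 1)]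
    by_cases hqe : q = M + 1
    · subst hqe
      rw [Function.update_self]
      linarith [(hlo p (by omega)).2]
    · rw [Function.update_of_ne hqe]
      exact ht1 p q hp hpq (by omega)
  · rw [Function.update_of_ne hp.ne, Function.update_of_ne hq.ne, Function.update_of_ne hr.ne,
      Function.update_self]
    exact hbig p q r hp hq hr
  · rw [Function.update_of_ne (by omega), Function.update_of_ne (by omega),
      Function.update_of_ne (by omega)]
    by_cases hje : j = M
    · subst hje
      rw [Function.update_self]
      exact ⟨fun _ => hbig _ _ _ (by omega) (by omega) (by omega), fun h => absurd (hlast i) h⟩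
    · rw [Function.update_of_ne (by omega)]
      exact ht2 i j hi hij (by omega)

/-! ### The facets `{i, i+1, j, j+1, N+1, N+2}` -/

/-- The facet `{i, i+1} ∪ {j, j+1} ∪ {N+1, N+2}` of the squeezed ball on `N + 2` vertices. -/
def pairFacet (N i j : ℕ) : Finset ℕ := {i, i + 1, j, j + 1, N + 1, N + 2}

lemma mem_pairFacet {N i j k : ℕ} : k ∈ pairFacet N i j ↔
    k = i ∨ k = i + 1 ∨ k = j ∨ k = j + 1 ∨ k = N + 1 ∨ k = N + 2 := by
  simp [pairFacet]

lemma card_pairFacet {N i j : ℕ} (hij : i + 2 ≤ j) (hj : j + 1 ≤ N) :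
    (pairFacet N i j).card = 6 := by
  rw [pairFacet]
  repeat rw [Finset.card_insert_of_notMem (by simp; omega)]
  simp

lemma pairFacet_inj {N i j i' j' : ℕ} (hij : i + 2 ≤ j) (hj : j + 1 ≤ N) (hij' : i' + 2 ≤ j')
    (hj' : j' + 1 ≤ N) (h : pairFacet N i j = pairFacet N i' j') : i' = i ∧ j' = j := by
  have h1 : i ∈ pairFacet N i' j' := h ▸ mem_pairFacet.2 (by omega)
  have h2 : i' ∈ pairFacet N i j := h ▸ mem_pairFacet.2 (by omega)
  have h3 : j + 1 ∈ pairFacet N i' j' := h ▸ mem_pairFacet.2 (by omega)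
  have h4 : j' + 1 ∈ pairFacet N i j := h ▸ mem_pairFacet.2 (by omega)
  rw [mem_pairFacet] at h1 h2 h3 h4
  omega

/-- Gale's evenness condition, in the form of a sign. -/
lemma prod_pairFacet_pos {N i j z : ℕ} (hij : i + 2 ≤ j) (hj : j + 1 ≤ N)
    (hz : z ∉ pairFacet N i j) :
    0 < ∏ w ∈ (pairFacet N i j).filter (· ≤ N), ((z : ℤ) - w) := by
  have hset : (pairFacet N i j).filter (· ≤ N) = {i, i + 1, j, j + 1} := by
    ext w
    simp only [Finset.mem_filter, mem_pairFacet, Finset.mem_insert, Finset.mem_singleton]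
    omega
  have hpair : ∀ a : ℕ, z ≠ a → z ≠ a + 1 → 0 < ((z : ℤ) - a) * (z - (a + 1 : ℕ)) := by
    intro a h1 h2
    rcases Nat.lt_or_gt_of_ne h1 with h | h
    · exact mul_pos_of_neg_of_neg (by omega) (by omega)
    · exact mul_pos (by omega) (by omega)
  rw [mem_pairFacet] at hz
  rw [hset, Finset.prod_insert (by simp; omega), Finset.prod_insert (by simp; omega),
    Finset.prod_insert (by simp), Finset.prod_singleton, ← mul_assoc]
  exact mul_pos (hpair i (by omega) (by omega)) (hpair j (by omega) (by omega))

lemma exists_insert_of_card {G F : Finset ℕ} (h : G ⊆ F) (hc : F.card = G.card + 1) :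
    ∃ y, y ∉ G ∧ F = insert y G := by
  obtain ⟨y, hy⟩ := Finset.card_eq_one.1
    (show (F \ G).card = 1 by rw [Finset.card_sdiff_of_subset h]; omega)
  have hyF : y ∈ F \ G := by rw [hy]; simp
  refine ⟨y, (Finset.mem_sdiff.1 hyF).2, ?_⟩
  rw [← Finset.sdiff_union_of_subset h, hy]
  rfl

/-- Every 5-set lies in at most two facets: the polynomial with roots in the common ridge would
otherwise take pairwise opposite signs at three points. -/
lemma card_pairFacet_supersets_le_two (N : ℕ) (𝓕 : Finset (Finset ℕ))
    (h𝓕 : ∀ F ∈ 𝓕, ∃ i j, i + 2 ≤ j ∧ j + 1 ≤ N ∧ F = pairFacet N i j)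
    (G : Finset ℕ) (hG : G.card = 5) : (𝓕.filter fun F => G ⊆ F).card ≤ 2 := by
  by_contra! hcon
  obtain ⟨F₁, F₂, F₃, h₁, h₂, h₃, h12, h13, h23⟩ := Finset.two_lt_card_iff.1 hcon
  have key : ∀ F ∈ 𝓕.filter fun F => G ⊆ F, ∃ y, y ∉ G ∧ F = insert y G := by
    intro F hF
    rw [Finset.mem_filter] at hF
    obtain ⟨i, j, hij, hj, rfl⟩ := h𝓕 F hF.1
    exact exists_insert_of_card hF.2 (by rw [card_pairFacet hij hj, hG])
  set P : ℕ → ℤ := fun z => ∏ w ∈ G.filter (· ≤ N), ((z : ℤ) - w) with hP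
  have hsgn : ∀ y y', y ∉ G → y' ∉ G → insert y G ∈ 𝓕 → insert y' G ∈ 𝓕 →
      insert y G ≠ insert y' G → 0 < ((y' : ℤ) - y) * P y' := by
    intro y y' hy hy' hF hF' hne
    obtain ⟨i, j, hij, hj, he⟩ := h𝓕 _ hF
    obtain ⟨i', j', hij', hj', he'⟩ := h𝓕 _ hF'
    have hyy : y ≠ y' := fun h => hne (by rw [h])
    have hyN : y ≤ N := by
      by_contra hyN
      have h1 : y ∈ pairFacet N i j := he ▸ Finset.mem_insert_self y G
      rw [mem_pairFacet] at h1
      have h2 : y ∈ insert y' G := he' ▸ mem_pairFacet.2 (by omega)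
      rw [Finset.mem_insert] at h2
      tauto
    have h3 : y' ∉ pairFacet N i j := by
      rw [← he, Finset.mem_insert]
      tauto
    have := prod_pairFacet_pos hij hj h3
    rwa [← he, Finset.filter_insert, if_pos hyN, Finset.prod_insert (by simp [hy])] at this
  have hopp : ∀ y y', y ∉ G → y' ∉ G → insert y G ∈ 𝓕 → insert y' G ∈ 𝓕 →
      insert y G ≠ insert y' G → P y * P y' < 0 := by
    intro y y' hy hy' hF hF' hne
    have h1 := hsgn y y' hy hy' hF hF' hne
    have h2 := hsgn y' y hy' hy hF' hF hne.symm
    have h3 := mul_pos h1 h2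
    by_contra! hc
    nlinarith [mul_nonneg hc (sq_nonneg ((y : ℤ) - y'))]
  obtain ⟨y₁, hy₁, rfl⟩ := key F₁ h₁
  obtain ⟨y₂, hy₂, rfl⟩ := key F₂ h₂
  obtain ⟨y₃, hy₃, rfl⟩ := key F₃ h₃
  have m₁ := (Finset.mem_filter.1 h₁).1
  have m₂ := (Finset.mem_filter.1 h₂).1
  have m₃ := (Finset.mem_filter.1 h₃).1
  have a12 := hopp _ _ hy₁ hy₂ m₁ m₂ h12
  have a13 := hopp _ _ hy₁ hy₃ m₁ m₃ h13
  have a23 := hopp _ _ hy₂ hy₃ m₂ m₃ h23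
  nlinarith [mul_pos_of_neg_of_neg a12 a13, sq_nonneg (P y₁),
    mul_nonpos_of_nonneg_of_nonpos (sq_nonneg (P y₁)) a23.le]

/-! ### The placement and its supporting hyperplanes -/

/-- The vertices of the polytope. Vertex `k ≤ N` is the moment curve point
`(1 : t : t² : t³ : t⁴)` in the affine chart `C - t³ = 1`, where the coordinate `t³` is redundant.
The origin of this chart is the point at infinity `(0 : 0 : 0 : -1 : 0)`, which sends a quartic to
minus its cubic coefficient. It is replaced by the vertices `N + 1` and `N + 2`, displaced
in opposite directions along a fifth axis. -/
def placement (N : ℕ) (C : ℝ) (t : ℕ → ℝ) (k : ℕ) : Fin 5 → ℝ :=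
  if k ≤ N then (C - t k ^ 3)⁻¹ • ![1, t k, t k ^ 2, t k ^ 4, 0]
  else if k = N + 1 then ![0, 0, 0, 0, 1] else ![0, 0, 0, 0, -1]

/-- The quartic `s (T - a) (T - b) (T - c) (T - e)` as an affine function on the placement. -/
lemma exists_affine_quartic (N : ℕ) (C : ℝ) (t : ℕ → ℝ) (hC : ∀ k ≤ N, t k ^ 3 < C)
    (s a b c e g : ℝ) : ∃ (ℓ : (Fin 5 → ℝ) →ₗ[ℝ] ℝ) (m : ℝ),
      (∀ k ≤ N, m - ℓ (placement N C t k) =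
        (C - t k ^ 3)⁻¹ * (s * ((t k - a) * (t k - b) * (t k - c) * (t k - e)))) ∧
      m - ℓ (placement N C t (N + 1)) = s * (a + b + c + e) + g ∧
      m - ℓ (placement N C t (N + 2)) = s * (a + b + c + e) - g := by
  refine ⟨-((s * (a * b * c * e) - C * (s * (a + b + c + e))) • LinearMap.proj 0
    + (-s * (a * b * c + a * b * e + a * c * e + b * c * e)) • LinearMap.proj 1
    + (s * (a * b + a * c + a * e + b * c + b * e + c * e)) • LinearMap.proj 2
    + s • LinearMap.proj 3 + g • LinearMap.proj 4), s * (a + b + c + e), fun k hk => ?_, ?_, ?_⟩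
  · have : C - t k ^ 3 ≠ 0 := (sub_pos.2 (hC k hk)).ne'
    simp [placement, hk]
    field_simp
    ring
  · simp [placement]
  · simp [placement]

lemma exists_support (N : ℕ) (C : ℝ) (t : ℕ → ℝ) (hC : ∀ k ≤ N, t k ^ 3 < C)
    (s a b c e g : ℝ) (G : Finset ℕ)
    (hin : ∀ k ∈ G, k ≤ N → (t k - a) * (t k - b) * (t k - c) * (t k - e) = 0)
    (hout : ∀ k, 1 ≤ k → k ≤ N → k ∉ G →
      0 < s * ((t k - a) * (t k - b) * (t k - c) * (t k - e)))
    (h1 : 0 ≤ s * (a + b + c + e) + g ∧ (s * (a + b + c + e) + g = 0 ↔ N + 1 ∈ G))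
    (h2 : 0 ≤ s * (a + b + c + e) - g ∧ (s * (a + b + c + e) - g = 0 ↔ N + 2 ∈ G)) :
    ∃ (ℓ : (Fin 5 → ℝ) →ₗ[ℝ] ℝ) (m : ℝ), ∀ k ∈ Finset.Icc 1 (N + 2),
      ℓ (placement N C t k) ≤ m ∧ (ℓ (placement N C t k) = m ↔ k ∈ G) := by
  obtain ⟨ℓ, m, hℓ, hℓ1, hℓ2⟩ := exists_affine_quartic N C t hC s a b c e g
  refine ⟨ℓ, m, fun k hk => ?_⟩
  rw [← sub_nonneg, eq_comm, ← sub_eq_zero]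
  rw [Finset.mem_Icc] at hk
  rcases (by omega : k ≤ N ∨ k = N + 1 ∨ k = N + 2) with h | rfl | rfl
  · rw [hℓ k h]
    by_cases hkG : k ∈ G
    · simp [hin k hkG h, hkG]
    · have := mul_pos (inv_pos.2 (sub_pos.2 (hC k h))) (hout k hk.1 h hkG)
      exact ⟨this.le, fun h => absurd h this.ne', fun h => absurd h hkG⟩
  · rwa [hℓ1]
  · rwa [hℓ2]

/-- Every boundary 5-set of the ball has a supporting hyperplane. If it omits `N + 1` or `N + 2`,
this comes from the quartic of its facet, whose roots have positive sum. Otherwise it is a triangle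
together with `N + 1, N + 2`, and the fourth root `e` is minus the sum of the three parameters of the
triangle; the adjacent Gale facet across the triangle is absent from the ball, which
locates `e` in the gap where the quartic keeps its sign on all other parameters. -/
lemma exists_support_boundary (N : ℕ) (C : ℝ) (t : ℕ → ℝ) (hC : ∀ k ≤ N, t k ^ 3 < C)
    (R : ℕ → ℕ → Prop)
    (hR : ∀ i j i' j', R i j → i ≤ i' → j ≤ j' → i' + 2 ≤ j' → R i' j')
    (hlast : ∀ i, R i (N - 1))
    (hmono : ∀ p q, 1 ≤ p → p < q → q ≤ N → t p < t q)
    (hbig : ∀ p q r, p < N → q < N → r < N → 0 < t p + t q + t r + t N)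
    (hsign : ∀ i j, 1 ≤ i → i + 2 ≤ j → j + 1 ≤ N →
        (R i j → 0 < t i + t (i + 1) + t j + t (j + 1)) ∧
        (¬ R i j → t i + t (i + 1) + t j + t (j + 1) < 0))
    (i j : ℕ) (hi : 1 ≤ i) (hij : i + 2 ≤ j) (hj : j + 1 ≤ N) (hRij : R i j)
    (G : Finset ℕ) (x : ℕ) (hx : x ∈ pairFacet N i j) (hG : G = (pairFacet N i j).erase x)
    (huniq : ∀ i' j', 1 ≤ i' → i' + 2 ≤ j' → j' + 1 ≤ N → R i' j' →
      (∀ k ∈ G, k ∈ pairFacet N i' j') → i' = i ∧ j' = j) :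
    ∃ (ℓ : (Fin 5 → ℝ) →ₗ[ℝ] ℝ) (m : ℝ), ∀ k ∈ Finset.Icc 1 (N + 2),
      ℓ (placement N C t k) ≤ m ∧ (ℓ (placement N C t k) = m ↔ k ∈ G) := by
  have hmem : ∀ k, k ∈ G ↔ k ≠ x ∧
      (k = i ∨ k = i + 1 ∨ k = j ∨ k = j + 1 ∨ k = N + 1 ∨ k = N + 2) := fun k => by
    rw [hG, Finset.mem_erase, mem_pairFacet]
  simp only [mem_pairFacet] at huniq
  have hle : ∀ p q, 1 ≤ p → p ≤ q → q ≤ N → t p ≤ t q := fun p q hp hpq hq => by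
    rcases hpq.eq_or_lt with rfl | h
    · exact le_rfl
    · exact (hmono p q hp h hq).le
  have hpair : ∀ k p, 1 ≤ k → k ≤ N → 1 ≤ p → p + 1 ≤ N → k ≠ p → k ≠ p + 1 →
      0 < (t k - t p) * (t k - t (p + 1)) := by
    intro k p hk hkN hp hpN h1 h2
    rcases Nat.lt_or_gt_of_ne h1 with h | h
    · exact mul_pos_of_neg_of_neg (sub_neg.2 (hmono _ _ hk h (by omega)))
        (sub_neg.2 (hmono _ _ hk (by omega) (by omega)))
    · exact mul_pos (sub_pos.2 (hmono _ _ hp h hkN))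
        (sub_pos.2 (hmono _ _ (by omega) (by omega) hkN))
  -- A root `e` that separates the parameters in the same way as `t r`.
  have hsep : ∀ e k r, 1 ≤ k → k ≤ N → 1 ≤ r → r ≤ N → k ≠ r → (2 ≤ r → t (r - 1) < e) →
      (r + 1 ≤ N → e < t (r + 1)) → 0 < (t k - e) * (t k - t r) := by
    intro e k r hk hkN hr hrN hkr h1 h2
    rcases Nat.lt_or_gt_of_ne hkr with h | h
    · have := hle k (r - 1) hk (by omega) (by omega)
      exact mul_pos_of_neg_of_neg (by linarith [h1 (by omega)])
        (sub_neg.2 (hmono _ _ hk h (by omega)))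
    · have := hle (r + 1) k (by omega) (by omega) hkN
      exact mul_pos (by linarith [h2 (by omega)]) (sub_pos.2 (hmono _ _ hr h hkN))
  have hpos := (hsign i j hi hij hj).1 hRij
  rw [mem_pairFacet] at hx
  -- The supporting function of a triangle together with both `N + 1` and `N + 2`.
  have hridge : ∀ s a b c : ℝ, N + 1 ∈ G → N + 2 ∈ G →
      (∀ k ∈ G, k ≤ N → (t k - a) * (t k - b) * (t k - c) * (t k - -(a + b + c)) = 0) →
      (∀ k, 1 ≤ k → k ≤ N → k ∉ G →
        0 < s * ((t k - a) * (t k - b) * (t k - c) * (t k - -(a + b + c)))) →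
      ∃ (ℓ : (Fin 5 → ℝ) →ₗ[ℝ] ℝ) (m : ℝ), ∀ k ∈ Finset.Icc 1 (N + 2),
        ℓ (placement N C t k) ≤ m ∧ (ℓ (placement N C t k) = m ↔ k ∈ G) := by
    intro s a b c hN1 hN2 h1 h2
    exact exists_support N C t hC s a b c (-(a + b + c)) 0 G h1 h2 (by simp [hN1]) (by simp [hN2])
  have hfull : N + 2 = x ∨ N + 1 = x →
      (∀ k ∈ G, k ≤ N →
        (t k - t i) * (t k - t (i + 1)) * (t k - t j) * (t k - t (j + 1)) = 0) ∧
      ∀ k, 1 ≤ k → k ≤ N → k ∉ G →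
        0 < 1 * ((t k - t i) * (t k - t (i + 1)) * (t k - t j) * (t k - t (j + 1))) := by
    intro hxN
    refine ⟨fun k hk hkN => ?_, fun k hk hkN hkG => ?_⟩
    · rw [hmem] at hk
      rcases (by omega : k = i ∨ k = i + 1 ∨ k = j ∨ k = j + 1) with rfl | rfl | rfl | rfl <;> simp
    · rw [hmem] at hkG
      have := mul_pos (hpair k i hk hkN hi (by omega) (by omega) (by omega))
        (hpair k j hk hkN (by omega) hj (by omega) (by omega))
      linarith
  rcases hx with rfl | rfl | rfl | rfl | rfl | rfl
  · -- Without `i`: the facets `(i + 1, j)` or `(i + 1, j + 1)` exclude all but the last triangle.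
    have hj2 : j = x + 2 := by
      by_contra hne
      have := huniq (x + 1) j (by omega) (by omega) hj
        (hR _ _ _ _ hRij (by omega) le_rfl (by omega)) fun k hk => by rw [hmem] at hk; omega
      omega
    have hjN : j + 1 = N := by
      by_contra hne
      have := huniq (x + 1) (j + 1) (by omega) (by omega) (by omega)
        (hR _ _ _ _ hRij (by omega) (by omega) (by omega)) fun k hk => by rw [hmem] at hk; omega
      omega
    subst hj2 hjN
    refine hridge (-1) (t (x + 1)) (t (x + 2)) (t (x + 2 + 1)) ((hmem _).2 (by omega))
      ((hmem _).2 (by omega)) (fun k hk hkN => ?_) fun k hk hkN hkG => ?_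
    · rw [hmem] at hk
      rcases (by omega : k = x + 1 ∨ k = x + 2 ∨ k = x + 2 + 1) with rfl | rfl | rfl <;> simp
    · rw [hmem] at hkG
      have h1 := hbig 1 (x + 1) (x + 2) (by omega) (by omega) (by omega)
      have h2 := hle 1 k le_rfl hk hkN
      have h3 := mul_pos (mul_pos (sub_pos.2 (hmono k (x + 1) hk (by omega) (by omega)))
        (sub_pos.2 (hmono k (x + 2) hk (by omega) (by omega))))
        (sub_pos.2 (hmono k (x + 2 + 1) hk (by omega) (by omega)))
      have h4 : 0 < t k + (t (x + 1) + t (x + 2) + t (x + 2 + 1)) := by linarith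
      have h5 := mul_pos h3 h4
      linarith
  · -- Without `i + 1`: the facet across is `(i - 1, j)`.
    refine hridge 1 (t i) (t j) (t (j + 1)) ((hmem _).2 (by omega))
      ((hmem _).2 (by omega)) (fun k hk hkN => ?_) fun k hk hkN hkG => ?_
    · rw [hmem] at hk
      rcases (by omega : k = i ∨ k = j ∨ k = j + 1) with rfl | rfl | rfl <;> simp
    · rw [hmem] at hkG
      have h1 := hsep (-(t i + t j + t (j + 1))) k i hk hkN hi (by omega) (by omega)
        (fun h2 => by
          have hnR : ¬ R (i - 1) j := fun hr => by
            have := huniq (i - 1) j (by omega) (by omega) hj hr fun k hk => by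
              rw [hmem] at hk; omega
            omega
          have := (hsign (i - 1) j (by omega) (by omega) hj).2 hnR
          rw [Nat.sub_add_cancel hi] at this
          linarith) (fun _ => by linarith)
      have := mul_pos h1 (hpair k j hk hkN (by omega) hj (by omega) (by omega))
      linarith
  · -- Without `j`: the facet `(i, j + 1)` excludes this unless `j + 1 = N`.
    have hjN : x + 1 = N := by
      by_contra hne
      have := huniq i (x + 1) hi (by omega) (by omega)
        (hR _ _ _ _ hRij (by omega) (by omega) (by omega)) fun k hk => by rw [hmem] at hk; omega
      omega
    subst hjN
    refine hridge (-1) (t i) (t (i + 1)) (t (x + 1)) ((hmem _).2 (by omega))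
      ((hmem _).2 (by omega)) (fun k hk hkN => ?_) fun k hk hkN hkG => ?_
    · rw [hmem] at hk
      rcases (by omega : k = i ∨ k = i + 1 ∨ k = x + 1) with rfl | rfl | rfl <;> simp
    · rw [hmem] at hkG
      have h1 := hbig 1 i (i + 1) (by omega) (by omega) (by omega)
      have h2 := hle 1 k le_rfl hk hkN
      have h3 := mul_pos (hpair k i hk hkN hi (by omega) (by omega) (by omega))
        (sub_pos.2 (hmono k (x + 1) hk (by omega) (by omega)))
      have h4 : 0 < t k + (t i + t (i + 1) + t (x + 1)) := by linarith
      have h5 := mul_pos h3 h4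
      linarith
  · -- Without `j + 1`: the facet across is `(i, j - 1)`, or `(i - 1, i + 1)` if `j = i + 2`.
    refine hridge 1 (t i) (t (i + 1)) (t j) ((hmem _).2 (by omega))
      ((hmem _).2 (by omega)) (fun k hk hkN => ?_) fun k hk hkN hkG => ?_
    · rw [hmem] at hk
      rcases (by omega : k = i ∨ k = i + 1 ∨ k = j) with rfl | rfl | rfl <;> simp
    · rw [hmem] at hkG
      rcases hij.eq_or_lt with rfl | hlt
      · rcases (by omega : k < i ∨ i + 3 ≤ k) with h | h
        · have hnR : ¬ R (i - 1) (i + 1) := fun hr => by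
            have := huniq (i - 1) (i + 1) (by omega) (by omega) (by omega) hr fun k hk => by
              rw [hmem] at hk; omega
            omega
          have h1 := (hsign (i - 1) (i + 1) (by omega) (by omega) (by omega)).2 hnR
          rw [Nat.sub_add_cancel hi] at h1
          have h1' : i + 1 + 1 = i + 2 := rfl
          rw [h1'] at h1
          have h2 := hle k (i - 1) hk (by omega) (by omega)
          have h3 := hpair k i hk hkN hi (by omega) (by omega) (by omega)
          have h4 := mul_pos_of_neg_of_neg (sub_neg.2 (hmono k (i + 2) hk (by omega) (by omega)))
            (show t k + (t i + t (i + 1) + t (i + 2)) < 0 by linarith)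
          have := mul_pos h3 h4
          linarith
        · have h2 := hle (i + 2 + 1) k (by omega) (by omega) hkN
          have h3 := hpair k i hk hkN hi (by omega) (by omega) (by omega)
          have h4 := mul_pos (sub_pos.2 (hmono (i + 2) k (by omega) (by omega) hkN))
            (show 0 < t k + (t i + t (i + 1) + t (i + 2)) by linarith)
          have := mul_pos h3 h4
          linarith
      · have h1 := hsep (-(t i + t (i + 1) + t j)) k j hk hkN (by omega) (by omega) (by omega)
          (fun h2 => by
            have hnR : ¬ R i (j - 1) := fun hr => by
              have := huniq i (j - 1) hi (by omega) (by omega) hr fun k hk => by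
                rw [hmem] at hk; omega
              omega
            have := (hsign i (j - 1) hi (by omega) (by omega)).2 hnR
            rw [Nat.sub_add_cancel (by omega : 1 ≤ j)] at this
            linarith) (fun _ => by linarith)
        have := mul_pos h1 (hpair k i hk hkN hi (by omega) (by omega) (by omega))
        linarith
  · obtain ⟨h1, h2⟩ := hfull (Or.inr rfl)
    refine exists_support N C t hC 1 _ _ _ _ (t i + t (i + 1) + t j + t (j + 1)) G h1 h2
      ⟨by linarith, ⟨fun h => by linarith, fun h => absurd rfl ((hmem _).1 h).1⟩⟩
      ⟨by linarith, ⟨fun _ => (hmem _).2 (by omega), fun _ => by ring⟩⟩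
  · obtain ⟨h1, h2⟩ := hfull (Or.inl rfl)
    refine exists_support N C t hC 1 _ _ _ _ (-(t i + t (i + 1) + t j + t (j + 1))) G h1 h2
      ⟨by linarith, ⟨fun _ => (hmem _).2 (by omega), fun _ => by ring⟩⟩
      ⟨by linarith, ⟨fun h => by linarith, fun h => absurd rfl ((hmem _).1 h).1⟩⟩

/-! ### Monomials of degree at most two and facets -/

lemma sortedIdx_toFinsupp {l : List ℕ} (hl : l.Pairwise (· ≤ ·)) :
    sortedIdx (Multiset.toFinsupp (l : Multiset ℕ)) = l := by
  rw [sortedIdx, Multiset.toFinsupp_toMultiset, Multiset.coe_sort]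
  exact List.mergeSort_eq_self _ hl

lemma toFinsupp_sortedIdx (u : Mon) : Multiset.toFinsupp (sortedIdx u : Multiset ℕ) = u := by
  rw [sortedIdx, Multiset.sort_eq, Finsupp.toMultiset_toFinsupp]

lemma pairwise_sortedIdx (u : Mon) : (sortedIdx u).Pairwise (· ≤ ·) :=
  Multiset.pairwise_sort _ _

lemma length_sortedIdx (u : Mon) : (sortedIdx u).length = degMon u := by
  rw [sortedIdx, Multiset.length_sort, Finsupp.card_toMultiset, degMon]
  rfl

lemma mem_sortedIdx {u : Mon} {j : ℕ} : j ∈ sortedIdx u ↔ j ∈ u.support := by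
  rw [sortedIdx, Multiset.mem_sort, Finsupp.mem_toMultiset]

/-- The facet of a monomial, in terms of its list of indices. -/
lemma Fface_toFinsupp (N : ℕ) {l : List ℕ} (hl : l.Pairwise (· ≤ ·)) :
    Fface (N + 2) 5 (Multiset.toFinsupp (l : Multiset ℕ)) =
      ((Finset.range l.length).biUnion fun k => {l.getD k 0 + 2 * k, l.getD k 0 + 2 * k + 1}) ∪
        Finset.Icc (N + 2 + 2 * l.length - 5) (N + 2) := by
  rw [Fface, ← length_sortedIdx, sortedIdx_toFinsupp hl]

lemma Fface_nil {N : ℕ} (hN : 4 ≤ N) :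
    Fface (N + 2) 5 (Multiset.toFinsupp (([] : List ℕ) : Multiset ℕ)) =
      pairFacet N (N - 3) (N - 1) := by
  rw [Fface_toFinsupp N List.Pairwise.nil]
  ext k
  simp [mem_pairFacet]
  omega

lemma Fface_one {N : ℕ} (hN : 4 ≤ N) (i : ℕ) :
    Fface (N + 2) 5 (Multiset.toFinsupp (([i] : List ℕ) : Multiset ℕ)) =
      pairFacet N i (N - 1) := by
  rw [Fface_toFinsupp N (List.pairwise_singleton _ i)]
  ext k
  simp [mem_pairFacet]
  omega

lemma Fface_two (N : ℕ) {i j : ℕ} (hij : i ≤ j) :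
    Fface (N + 2) 5 (Multiset.toFinsupp (([i, j] : List ℕ) : Multiset ℕ)) =
      pairFacet N i (j + 2) := by
  rw [Fface_toFinsupp N (by simpa using hij)]
  ext k
  simp [mem_pairFacet, Finset.range_add_one]
  omega

/-- The pairs `(i, j)` for which `pairFacet N i j` is a facet: either `j` has the largest
possible value `N - 1`, or `x_i x_{j-2} ∈ U`. -/
def facetRel (N : ℕ) (U : Finset Mon) (i j : ℕ) : Prop :=
  N - 1 ≤ j ∨
    (i + 2 ≤ j ∧ Multiset.toFinsupp (([i, j - 2] : List ℕ) : Multiset ℕ) ∈ U)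

/-- The up-closure comes from `U` being shifted. -/
lemma facetRel_mono {N : ℕ} {U : Finset Mon} (hU : IsShiftedOrderIdeal (N - 4) U)
    (i j i' j' : ℕ) (h : facetRel N U i j) (hi : i ≤ i') (hj : j ≤ j') (hij' : i' + 2 ≤ j') :
    facetRel N U i' j' := by
  obtain ⟨-, -, hvar, -, hshift⟩ := hU
  by_cases hjN : N - 1 ≤ j'
  · exact Or.inl hjN
  rcases h with h | ⟨hij, h⟩
  · omega
  have hp : ([i, j - 2] : List ℕ).Pairwise (· ≤ ·) := by simp; omega
  have hp' : ([i', j' - 2] : List ℕ).Pairwise (· ≤ ·) := by simp; omega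
  have hi1 : 1 ≤ i := (hvar _ h i (by
    rw [← mem_sortedIdx, sortedIdx_toFinsupp hp]; simp)).1
  refine Or.inr ⟨hij', hshift _ h _ ?_ ?_⟩
  · rw [prec, sortedIdx_toFinsupp hp, sortedIdx_toFinsupp hp']
    exact .cons hi (.cons (by omega) .nil)
  · intro k hk
    rw [← mem_sortedIdx, sortedIdx_toFinsupp hp'] at hk
    simp at hk
    omega

lemma mem_facets_iff {N : ℕ} (hN : 4 ≤ N) {U : Finset Mon}
    (hU : IsShiftedOrderIdeal (N - 4) U) (hdeg : ∀ u ∈ U, degMon u ≤ 2) (F : Finset ℕ) :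
    F ∈ U.image (fun u => Fface (N + 2) 5 u) ↔ ∃ i j, 1 ≤ i ∧ i + 2 ≤ j ∧ j + 1 ≤ N ∧
      facetRel N U i j ∧ F = pairFacet N i j := by
  obtain ⟨hone, hvars, hvar, -, -⟩ := hU
  rw [Finset.mem_image]
  constructor
  · rintro ⟨u, hu, rfl⟩
    have hlen := (length_sortedIdx u).trans_le (hdeg u hu)
    have hsort := pairwise_sortedIdx u
    have hmem : ∀ k ∈ sortedIdx u, 1 ≤ k ∧ k ≤ N - 4 := fun k hk =>
      hvar u hu k (mem_sortedIdx.1 hk)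
    rw [← toFinsupp_sortedIdx u] at hu ⊢
    generalize sortedIdx u = l at *
    match l with
    | [] =>
      exact ⟨N - 3, N - 1, by omega, by omega, by omega, Or.inl le_rfl, Fface_nil hN⟩
    | [i] =>
      have := hmem i (by simp)
      exact ⟨i, N - 1, by omega, by omega, by omega, Or.inl le_rfl, Fface_one hN i⟩
    | [i, j] =>
      have h1 := hmem i (by simp)
      have h2 := hmem j (by simp)
      have hij : i ≤ j := by simpa using hsort
      exact ⟨i, j + 2, by omega, by omega, by omega, Or.inr ⟨by omega, hu⟩, Fface_two N hij⟩
    | _ :: _ :: _ :: _ => simp at hlen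
  · rintro ⟨i, j, hi, hij, hj, hR, rfl⟩
    rcases hR with hR | ⟨-, hR⟩
    · obtain rfl : j = N - 1 := by omega
      by_cases hi3 : i = N - 3
      · subst hi3
        exact ⟨_, by simpa using hone, Fface_nil hN⟩
      · exact ⟨_, by simpa using hvars i hi (by omega), Fface_one hN i⟩
    · refine ⟨_, hR, ?_⟩
      rw [Fface_two N (by omega), Nat.sub_add_cancel (by omega)]

/-! ### The polytope of an order ideal -/

lemma subset_facet_unique {𝓕 : Finset (Finset ℕ)} {G F F' : Finset ℕ}
    (h1 : (𝓕.filter fun F => G ⊆ F).card = 1) (hF : F ∈ 𝓕) (hGF : G ⊆ F)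
    (hF' : F' ∈ 𝓕) (hGF' : G ⊆ F') : F = F' :=
  Finset.card_le_one.1 h1.le F (Finset.mem_filter.2 ⟨hF, hGF⟩) F'
    (Finset.mem_filter.2 ⟨hF', hGF'⟩)

/-- Removing a vertex common to all facets from a facet gives a face lying in no other facet. This
applies to the vertices `N + 1` and `N + 2`. -/
lemma card_filter_erase {e : ℕ} {𝓕 : Finset (Finset ℕ)}
    (h𝓕 : ∀ F ∈ 𝓕, F.card = 6 ∧ e ∈ F) {F : Finset ℕ} (hF : F ∈ 𝓕) :
    (𝓕.filter fun F' => F.erase e ⊆ F').card = 1 := by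
  rw [Finset.card_eq_one]
  refine ⟨F, ?_⟩
  ext F'
  rw [Finset.mem_filter, Finset.mem_singleton]
  constructor
  · rintro ⟨hF', hsub⟩
    have : F ⊆ F' := by
      rw [← Finset.insert_erase (h𝓕 F hF).2]
      exact Finset.insert_subset (h𝓕 F' hF').2 hsub
    exact (Finset.eq_of_subset_of_card_le this (by rw [(h𝓕 F hF).1, (h𝓕 F' hF').1])).symm
  · rintro rfl
    exact ⟨hF, Finset.erase_subset _ _⟩

lemma squeezed4Sphere_polytopal_aux (N : ℕ) (hN : 4 ≤ N) (U : Finset Mon)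
    (hU : IsShiftedOrderIdeal (N - 4) U) (hdeg : ∀ u ∈ U, degMon u ≤ 2) :
    IsPolytopalSphere (N + 2) 5 (squeezedSphere (N + 2) 5 U) := by
  obtain ⟨t, hmono, hbig, hsign⟩ := exists_parameters N hN (facetRel N U) (facetRel_mono hU)
    fun i => Or.inl le_rfl
  obtain ⟨B, -, hB⟩ := exists_abs_bound (fun k => t k ^ 3) N
  have hC : ∀ k ≤ N, t k ^ 3 < B + 1 := fun k hk => by
    linarith [le_abs_self (t k ^ 3), hB k hk]
  have hiff := mem_facets_iff hN hU hdeg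
  rw [squeezedSphere]
  set 𝓕 := U.image fun u => Fface (N + 2) 5 u with h𝓕
  have hball : ∀ G, G ∈ squeezedBall (N + 2) 5 U ↔ ∃ F ∈ 𝓕, G ⊆ F := fun G => by
    simp [squeezedBall, h𝓕]
  have hcard6 : ∀ F ∈ 𝓕, F.card = 6 := fun F hF => by
    obtain ⟨i, j, -, hij, hj, -, rfl⟩ := (hiff F).1 hF
    exact card_pairFacet hij hj
  have hbd : ∀ G, (G ∈ (squeezedBall (N + 2) 5 U).filter fun G => G.card = 5 ∧
      (𝓕.filter fun F => G ⊆ F).card = 1) ↔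
      G.card = 5 ∧ (𝓕.filter fun F => G ⊆ F).card = 1 := fun G => by
    rw [Finset.mem_filter, hball]
    refine ⟨fun h => h.2, fun h => ⟨?_, h⟩⟩
    obtain ⟨F, hF⟩ := Finset.card_pos.1 (by rw [h.2]; exact one_pos)
    exact ⟨F, Finset.mem_filter.1 hF⟩
  refine isPolytopalSphere_of_facets (placement N (B + 1) t) _ (fun G hG => ?_) (fun G hG => ?_)
    (by omega) (fun G hG => ?_) (fun G hG x hx => ?_) (fun k hk => ?_)
  · obtain ⟨F, hF, hGF⟩ := (hball G).1 (Finset.mem_filter.1 hG).1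
    obtain ⟨i, j, hi, hij, hj, -, rfl⟩ := (hiff F).1 hF
    intro k hk
    have := mem_pairFacet.1 (hGF hk)
    rw [Finset.mem_Icc]
    omega
  · exact ((hbd G).1 hG).1
  · obtain ⟨F, hF, hGF⟩ := (hball G).1 (Finset.mem_filter.1 hG).1
    have hG := (hbd G).1 hG
    obtain ⟨y, hy, hFy⟩ := exists_insert_of_card hGF (by rw [hcard6 F hF, hG.1])
    obtain ⟨i, j, hi, hij, hj, hR, hFe⟩ := (hiff F).1 hF
    refine exists_support_boundary N (B + 1) t hC (facetRel N U) (facetRel_mono hU)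
      (fun i => Or.inl le_rfl) hmono hbig hsign i j hi hij hj hR G y ?_ ?_ ?_
    · rw [← hFe, hFy]; exact Finset.mem_insert_self _ _
    · rw [← hFe, hFy, Finset.erase_insert hy]
    · intro i' j' hi' hij' hj' hR' hGk
      have h := subset_facet_unique hG.2 hF hGF
        ((hiff _).2 ⟨i', j', hi', hij', hj', hR', rfl⟩) hGk
      exact pairFacet_inj hij hj hij' hj' (hFe ▸ h)
  · have hG := (hbd G).1 hG
    obtain ⟨G', h1, h2, h3, h4⟩ := exists_boundary_exchange 5 𝓕 hcard6
      (card_pairFacet_supersets_le_two N 𝓕 fun F hF => by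
        obtain ⟨i, j, -, hij, hj, -, h⟩ := (hiff F).1 hF
        exact ⟨i, j, hij, hj, h⟩) G hG.1 hG.2 x hx
    exact ⟨G', (hbd G').2 ⟨h1, h2⟩, h3, h4⟩
  · rw [Finset.mem_Icc] at hk
    -- a facet through `k`, and a vertex `e ≠ k` contained in all facets
    obtain ⟨i, hi, hi3, hki⟩ : ∃ i, 1 ≤ i ∧ i ≤ N - 3 ∧ k ∈ pairFacet N i (N - 1) :=
      ⟨min k (N - 3), by omega, by omega, mem_pairFacet.2 (by omega)⟩
    obtain ⟨e, he, hek⟩ : ∃ e, (e = N + 1 ∨ e = N + 2) ∧ k ≠ e := by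
      by_cases h : k = N + 1
      · exact ⟨N + 2, by omega, by omega⟩
      · exact ⟨N + 1, by omega, h⟩
    have hF : pairFacet N i (N - 1) ∈ 𝓕 :=
      (hiff _).2 ⟨i, N - 1, hi, by omega, by omega, Or.inl le_rfl, rfl⟩
    have heF : ∀ F ∈ 𝓕, F.card = 6 ∧ e ∈ F := fun F hF => by
      refine ⟨hcard6 F hF, ?_⟩
      obtain ⟨i, j, -, -, -, -, rfl⟩ := (hiff F).1 hF
      exact mem_pairFacet.2 (by omega)
    refine ⟨(pairFacet N i (N - 1)).erase e, (hbd _).2 ⟨?_, card_filter_erase heF hF⟩,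
      Finset.mem_erase.2 ⟨hek, hki⟩⟩
    rw [Finset.card_erase_of_mem (heF _ hF).2, hcard6 _ hF]

/-- **Lemma (Murai, Lemma 6.1; after Pfeifle).** Every S-squeezed `4`-sphere
is polytopal: for every shifted order ideal `U ⊂ S_[n-6]` of monomials of
degree at most `2`, the S-squeezed `4`-sphere `S₅(U)` is isomorphic to the
boundary complex of a simplicial `5`-polytope. -/
theorem squeezed4Sphere_polytopal (n : ℕ) (hn : 5 < n) (U : Finset Mon)
    (hU : IsShiftedOrderIdeal (n - 6) U) (hdeg : ∀ u ∈ U, degMon u ≤ 2) :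
    IsPolytopalSphere n 5 (squeezedSphere n 5 U) := by
  obtain ⟨N, rfl⟩ : ∃ N, n = N + 2 := ⟨n - 2, by omega⟩
  exact squeezed4Sphere_polytopal_aux N (by omega) U hU hdeg

end SqueezedSpheres
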